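/- For every N ∈ ℕ there exists a constant C > 0 such that for every λ ∈ h, every x ∈ a and all unit vectors ξ₁, …, ξ_N ∈ a, |∂_{ξ₁} ⋯ ∂_{ξ_N} G_λ(x)| ≤ C (1 + |λ|)^N F_0(x) e^{max_{w∈W} (w Re λ, x)}. -/

import Mathlib

open scoped BigOperators RealInnerProductSpace Classical

noncomputable section

variable {E : Type*} [NormedAddCommGroup E] [InnerProductSpace ℝ E] [FiniteDimensional ℝ E]

/-- The coroot `α∨ = 2α/|α|²`. -/
def coroot (α : E) : E := (2 / ⟪α, α⟫) • α

/-- The orthogonal reflection `r_α x = x - (α∨, x) α`. -/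
def rRefl (α : E) (x : E) : E := x - ⟪coroot α, x⟫ • α

/-- Data of an integral root system with positive subsystem and
a Weyl-invariant positive multiplicity function. -/
structure HOData (E : Type*) [NormedAddCommGroup E] [InnerProductSpace ℝ E] : Type _ where
  R : Finset E
  Rpos : Finset E
  k : E → ℝ
  k_pos : ∀ α ∈ R, 0 < k α
  root_ne_zero : ∀ α ∈ R, α ≠ 0
  pos_subset : Rpos ⊆ R
  pos_char : ∃ u : E, ∀ α ∈ R, (α ∈ Rpos ↔ 0 < ⟪α, u⟫)
  pos_or_neg : ∀ α ∈ R, α ∈ Rpos ∨ -α ∈ Rpos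
  neg_mem : ∀ α ∈ R, -α ∈ R
  integral : ∀ α ∈ R, ∀ β ∈ R, ∃ n : ℤ, ⟪coroot α, β⟫ = (n : ℝ)
  refl_mem : ∀ α ∈ R, ∀ β ∈ R, rRefl α β ∈ R
  k_inv : ∀ α ∈ R, ∀ β ∈ R, k (rRefl α β) = k β

/-- The Weyl group: the subgroup of linear isometries generated by the root reflections. -/
def weylGroup (D : HOData E) : Subgroup (E ≃ₗᵢ[ℝ] E) :=
  Subgroup.closure {w : E ≃ₗᵢ[ℝ] E | ∃ α ∈ D.R, ∀ x, w x = rRefl α x}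

/-- `ρ = (1/2) Σ_{α ∈ R⁺} k_α α`. -/
def rhoHO (D : HOData E) : E := (2:ℝ)⁻¹ • ∑ α ∈ D.Rpos, D.k α • α

/-- Regular points. -/
def HORegular (D : HOData E) (x : E) : Prop := ∀ α ∈ D.R, ⟪α, x⟫ ≠ 0

/-- The (open) positive Weyl chamber. -/
def posChamber (D : HOData E) : Set E := {x | ∀ α ∈ D.Rpos, 0 < ⟪α, x⟫}

/-- The positive indivisible roots `R₀⁺`. -/
def Rpos0 (D : HOData E) : Finset E := D.Rpos.filter (fun α => (2:ℝ)⁻¹ • α ∉ D.R)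

/-- The Opdam function `G_λ` for a real parameter `λ`: an analytic function,
normalized at `0`, satisfying the Cherednik differential-difference system. -/
def IsOpdamR (D : HOData E) (lam : E) (G : E → ℝ) : Prop :=
  AnalyticOnNhd ℝ G Set.univ ∧ G 0 = 1 ∧
  ∀ ξ x, HORegular D x →
    fderiv ℝ G x ξ =
      (∑ α ∈ D.Rpos, D.k α * ⟪α, ξ⟫ / (1 - Real.exp (-⟪α, x⟫)) * (G (rRefl α x) - G x))
      + ⟪rhoHO D + lam, ξ⟫ * G x

/-- The Opdam function `G_λ` for a complex parameter `λ = l1 + i l2 ∈ h`. -/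
def IsOpdamC (D : HOData E) (l1 l2 : E) (G : E → ℂ) : Prop :=
  AnalyticOnNhd ℝ G Set.univ ∧ G 0 = 1 ∧
  ∀ ξ x, HORegular D x →
    fderiv ℝ G x ξ =
      (∑ α ∈ D.Rpos, ((D.k α * ⟪α, ξ⟫ / (1 - Real.exp (-⟪α, x⟫)) : ℝ) : ℂ)
          * (G (rRefl α x) - G x))
      + (((⟪rhoHO D + l1, ξ⟫ : ℝ) : ℂ) + Complex.I * ((⟪l2, ξ⟫ : ℝ) : ℂ)) * G x

/-- The symmetrization `F(x) = |W|⁻¹ Σ_{w ∈ W} G(w x)` (real valued case). -/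
def Fsym (D : HOData E) [Fintype (weylGroup D)] (G : E → ℝ) (x : E) : ℝ :=
  (Fintype.card (weylGroup D) : ℝ)⁻¹ * ∑ w : weylGroup D, G (w.1 x)

/-- The symmetrization `F(x) = |W|⁻¹ Σ_{w ∈ W} G(w x)` (complex valued case). -/
def FsymC (D : HOData E) [Fintype (weylGroup D)] (G : E → ℂ) (x : E) : ℂ :=
  (Fintype.card (weylGroup D) : ℂ)⁻¹ * ∑ w : weylGroup D, G (w.1 x)

/-- `max_{w ∈ W} (w λ, x)`. -/
def maxW (D : HOData E) [Fintype (weylGroup D)] (lam x : E) : ℝ :=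
  ⨆ w : weylGroup D, ⟪w.1 lam, x⟫

set_option linter.unusedSectionVars false

/-- A function that is positive to the left of `t` and nonpositive at `t` has a nonpositive
derivative there. -/
theorem hasDerivAt_nonpos_of_pos_left {y : ℝ → ℝ} {y' s t : ℝ} (hy : HasDerivAt y y' t)
    (hst : s < t) (hpos : ∀ u, s ≤ u → u < t → 0 < y u) (ht : y t ≤ 0) : y' ≤ 0 := by
  have h := (hasDerivWithinAt_iff_tendsto_slope' (s := Set.Iio t) (by simp)).1 hy.hasDerivWithinAt
  refine le_of_tendsto h ?_
  filter_upwards [Ico_mem_nhdsLT hst] with u hu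
  rw [slope_def_field]
  have h1 : 0 ≤ y u - y t := by linarith [hpos u hu.1 hu.2]
  have h2 : u - t ≤ 0 := by linarith [hu.2]
  exact div_nonpos_of_nonneg_of_nonpos h1 h2

/-- Comparison principle for a cooperative linear system on `[0, 1]` whose coupling coefficients
may be singular at the left end point. -/
theorem norm_le_of_cooperative_system {ι J : Type*} [Finite ι] (s : Finset J) (σ : J → ι → ι)
    (b : J → ι → ℝ → ℝ) (hb : ∀ j ∈ s, ∀ w, ∀ t, 0 < t → t ≤ 1 → 0 ≤ b j w t)
    (Φ : ι → ℝ → ℂ) (Ψ : ι → ℝ → ℝ) (μ : ι → ℂ) (ν : ι → ℝ) (hμν : ∀ w, (μ w).re ≤ ν w)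
    (hΦc : ∀ w, Continuous (Φ w)) (hΨc : ∀ w, Continuous (Ψ w))
    (hΦ : ∀ w t, 0 < t → t ≤ 1 → HasDerivAt (Φ w)
      (∑ j ∈ s, (b j w t : ℂ) * (Φ (σ j w) t - Φ w t) + μ w * Φ w t) t)
    (hΨ : ∀ w t, 0 < t → t ≤ 1 → HasDerivAt (Ψ w)
      (∑ j ∈ s, b j w t * (Ψ (σ j w) t - Ψ w t) + ν w * Ψ w t) t)
    (h0 : ∀ w, ‖Φ w 0‖ ≤ Ψ w 0) (w : ι) : ‖Φ w 1‖ ≤ Ψ w 1 := by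
  obtain ⟨K, hK⟩ : ∃ K : ℝ, ∀ w, ν w ≤ K := by
    obtain ⟨K, hK⟩ := (Set.finite_range ν).bddAbove
    exact ⟨K, fun w => hK ⟨w, rfl⟩⟩
  have key : ∀ ε > 0, ∀ w, 0 < Real.exp (-K * 1) * (Ψ w 1 - ‖Φ w 1‖) + ε * (1 + 1) := by
    intro ε hε
    set Y : ι → ℝ → ℝ := fun w t => Real.exp (-K * t) * (Ψ w t - ‖Φ w t‖) + ε * (1 + t) with hY
    have hYc : ∀ w, Continuous (Y w) := fun w => by
      have := hΦc w
      have := hΨc w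
      fun_prop
    by_contra hcon
    push Not at hcon
    obtain ⟨w₁, hw₁⟩ := hcon
    set T : Set ℝ := Set.Icc 0 1 ∩ ⋃ w, {t | Y w t ≤ 0} with hT
    have hTclosed : IsClosed T :=
      isClosed_Icc.inter (isClosed_iUnion_of_finite fun w => isClosed_le (hYc w) continuous_const)
    have hTc : IsCompact T := isCompact_Icc.of_isClosed_subset hTclosed Set.inter_subset_left
    have hTne : T.Nonempty := ⟨1, by simp, Set.mem_iUnion.2 ⟨w₁, hw₁⟩⟩
    obtain ⟨t, ⟨⟨ht0, ht1⟩, htw⟩, htmin⟩ := hTc.exists_isLeast hTne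
    obtain ⟨w, hw⟩ := Set.mem_iUnion.1 htw
    have hw : Y w t ≤ 0 := hw
    have hlt : ∀ v u, 0 ≤ u → u < t → 0 < Y v u := by
      intro v u hu hut
      by_contra hneg
      exact absurd (htmin ⟨⟨hu, by linarith⟩, Set.mem_iUnion.2 ⟨v, not_lt.1 hneg⟩⟩) (not_le.2 hut)
    have htpos : 0 < t := by
      rcases ht0.lt_or_eq with h | h
      · exact h
      · exfalso
        rw [← h] at hw
        have := h0 w
        simp only [hY, mul_zero, Real.exp_zero, one_mul, add_zero, mul_one] at hw
        linarith
    have hge : ∀ v, 0 ≤ Y v t := by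
      intro v
      have hmem : t ∈ closure (Set.Ico 0 t) := by
        rw [closure_Ico htpos.ne]; exact ⟨ht0, le_rfl⟩
      exact (isClosed_le continuous_const (hYc v)).closure_subset_iff.2
        (fun u hu => (hlt v u hu.1 hu.2).le) hmem
    have hw0 : Y w t = 0 := le_antisymm hw (hge w)
    obtain ⟨θ, hθ, hθΦ⟩ : ∃ θ : ℂ, ‖θ‖ = 1 ∧ θ * Φ w t = ‖Φ w t‖ := by
      by_cases hz : Φ w t = 0
      · exact ⟨1, by simp, by simp [hz]⟩
      · refine ⟨(starRingEnd ℂ) (Φ w t) / ‖Φ w t‖, by simp [hz], ?_⟩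
        have hn : (‖Φ w t‖ : ℂ) ≠ 0 := by simpa using hz
        rw [div_mul_eq_mul_div, Complex.conj_mul', pow_two, mul_div_assoc, div_self hn, mul_one]
    have hre : ∀ v u, (θ * Φ v u).re ≤ ‖Φ v u‖ := fun v u => by
      simpa [hθ] using Complex.re_le_norm (θ * Φ v u)
    set y : ℝ → ℝ := fun u => Real.exp (-K * u) * (Ψ w u - (θ * Φ w u).re) + ε * (1 + u) with hy
    set P := ∑ j ∈ s, b j w t * (Ψ (σ j w) t - Ψ w t) + ν w * Ψ w t with hP
    set Q := ∑ j ∈ s, (b j w t : ℂ) * (Φ (σ j w) t - Φ w t) + μ w * Φ w t with hQ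
    have hyd : HasDerivAt y (Real.exp (-K * t) * (-K) * (Ψ w t - (θ * Φ w t).re) +
        Real.exp (-K * t) * (P - (θ * Q).re) + ε) t := by
      have h1 : HasDerivAt (fun u => (θ * Φ w u).re) (θ * Q).re t :=
        (Complex.reCLM.hasFDerivAt.comp_hasDerivAt t ((hΦ w t htpos ht1).const_mul θ))
      have h2 : HasDerivAt (fun u => Real.exp (-K * u)) (Real.exp (-K * t) * (-K)) t := by
        simpa using ((hasDerivAt_id t).const_mul (-K)).exp
      have h3 : HasDerivAt (fun u => ε * (1 + u)) ε t := by
        simpa using ((hasDerivAt_id t).const_add 1).const_mul ε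
      exact (h2.mul ((hΨ w t htpos ht1).sub h1)).add h3
    have hle := hasDerivAt_nonpos_of_pos_left hyd htpos (fun u hu hut => by
      have h1 := hlt w u hu hut
      have h2 := hre w u
      have h3 := Real.exp_pos (-K * u)
      simp only [hY] at h1
      simp only [hy]
      nlinarith) (by
      simp only [hy, hθΦ, Complex.ofReal_re]
      exact hw)
    set Z : ι → ℝ := fun v => Ψ v t - (θ * Φ v t).re with hZ
    have hZw : Z w = Ψ w t - ‖Φ w t‖ := by
      simp only [hZ, hθΦ, Complex.ofReal_re]
    have hexp := Real.exp_pos (-K * t)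
    have hZge : ∀ v, Z w ≤ Z v := fun v => by
      have h1 := hge v
      have h2 := hre v t
      have h3 := hw0
      simp only [hY] at h1 h3
      have : Real.exp (-K * t) * Z w ≤ Real.exp (-K * t) * Z v := by
        rw [hZw]
        simp only [hZ]
        nlinarith
      exact le_of_mul_le_mul_left this hexp
    have hPQ : P - (θ * Q).re = ∑ j ∈ s, b j w t * (Z (σ j w) - Z w) + ν w * Z w +
        (ν w - (μ w).re) * ‖Φ w t‖ := by
      have h1 : θ * Q = ∑ j ∈ s, (b j w t : ℂ) * (θ * Φ (σ j w) t - θ * Φ w t) +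
          μ w * (θ * Φ w t) := by
        rw [hQ, mul_add, Finset.mul_sum]
        congr 1
        · exact Finset.sum_congr rfl fun j _ => by ring
        · ring
      have h2 : (θ * Q).re = ∑ j ∈ s, b j w t * ((θ * Φ (σ j w) t).re - (θ * Φ w t).re) +
          (μ w).re * ‖Φ w t‖ := by
        rw [h1]
        simp only [Complex.add_re, Complex.re_sum, Complex.re_ofReal_mul, Complex.sub_re]
        congr 1
        rw [hθΦ, Complex.re_mul_ofReal]
      have h3 : ∀ j ∈ s, b j w t * (Z (σ j w) - Z w) = b j w t * (Ψ (σ j w) t - Ψ w t) -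
          b j w t * ((θ * Φ (σ j w) t).re - (θ * Φ w t).re) := fun j _ => by
        simp only [hZ]; ring
      rw [h2, hP, Finset.sum_congr rfl h3, Finset.sum_sub_distrib, hZw]
      ring
    have hsum : 0 ≤ ∑ j ∈ s, b j w t * (Z (σ j w) - Z w) :=
      Finset.sum_nonneg fun j hj => mul_nonneg (hb j hj w t htpos ht1) (sub_nonneg.2 (hZge _))
    have hμ : 0 ≤ (ν w - (μ w).re) * ‖Φ w t‖ :=
      mul_nonneg (sub_nonneg.2 (hμν w)) (norm_nonneg _)
    have hzero : Real.exp (-K * t) * Z w = -(ε * (1 + t)) := by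
      have h3 := hw0
      simp only [hY] at h3
      rw [hZw]; linarith
    have hZdef : Ψ w t - (θ * Φ w t).re = Z w := rfl
    rw [hZdef, hPQ] at hle
    have h5 : 0 ≤ Real.exp (-K * t) * (∑ j ∈ s, b j w t * (Z (σ j w) - Z w) +
        (ν w - (μ w).re) * ‖Φ w t‖) := by positivity
    have h6 : 0 ≤ (K - ν w) * (ε * (1 + t)) := mul_nonneg (sub_nonneg.2 (hK w)) (by positivity)
    have h7 : (K - ν w) * (Real.exp (-K * t) * Z w) = -((K - ν w) * (ε * (1 + t))) := by
      rw [hzero]; ring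
    nlinarith
  have hexp := Real.exp_pos (-K * 1)
  have : 0 ≤ Real.exp (-K * 1) * (Ψ w 1 - ‖Φ w 1‖) := by
    refine le_of_forall_pos_le_add fun ε hε => ?_
    have := key (ε / 2) (by positivity) w
    linarith
  linarith [nonneg_of_mul_nonneg_right this hexp]

/-- The Taylor coefficients at `0` of a function of one real variable. -/
def taylorCoeff (φ : ℝ → ℂ) (n : ℕ) : ℂ := iteratedDeriv n φ 0 / n.factorial

theorem taylorCoeff_zero (φ : ℝ → ℂ) : taylorCoeff φ 0 = φ 0 := by simp [taylorCoeff]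

theorem taylorCoeff_congr {φ ψ : ℝ → ℂ} (h : φ =ᶠ[nhds 0] ψ) (n : ℕ) :
    taylorCoeff φ n = taylorCoeff ψ n := by
  rw [taylorCoeff, taylorCoeff, h.iteratedDeriv_eq]

theorem taylorCoeff_add {φ ψ : ℝ → ℂ} (hφ : AnalyticAt ℝ φ 0) (hψ : AnalyticAt ℝ ψ 0) (n : ℕ) :
    taylorCoeff (fun t => φ t + ψ t) n = taylorCoeff φ n + taylorCoeff ψ n := by
  rw [taylorCoeff, taylorCoeff, taylorCoeff, iteratedDeriv_fun_add hφ.contDiffAt hψ.contDiffAt,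
    add_div]

theorem taylorCoeff_sub {φ ψ : ℝ → ℂ} (hφ : AnalyticAt ℝ φ 0) (hψ : AnalyticAt ℝ ψ 0) (n : ℕ) :
    taylorCoeff (fun t => φ t - ψ t) n = taylorCoeff φ n - taylorCoeff ψ n := by
  rw [taylorCoeff, taylorCoeff, taylorCoeff, iteratedDeriv_fun_sub hφ.contDiffAt hψ.contDiffAt,
    sub_div]

theorem taylorCoeff_const_mul {φ : ℝ → ℂ} (hφ : AnalyticAt ℝ φ 0) (c : ℂ) (n : ℕ) :
    taylorCoeff (fun t => c * φ t) n = c * taylorCoeff φ n := by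
  rw [taylorCoeff, taylorCoeff, iteratedDeriv_const_mul c hφ.contDiffAt, mul_div_assoc]

theorem taylorCoeff_sum {J : Type*} (s : Finset J) {φ : J → ℝ → ℂ}
    (hφ : ∀ j ∈ s, AnalyticAt ℝ (φ j) 0) (n : ℕ) :
    taylorCoeff (fun t => ∑ j ∈ s, φ j t) n = ∑ j ∈ s, taylorCoeff (φ j) n := by
  simp only [taylorCoeff]
  rw [iteratedDeriv_fun_sum fun j hj => (hφ j hj).contDiffAt, Finset.sum_div]

theorem taylorCoeff_mul {φ ψ : ℝ → ℂ} (hφ : AnalyticAt ℝ φ 0) (hψ : AnalyticAt ℝ ψ 0) (n : ℕ) :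
    taylorCoeff (fun t => φ t * ψ t) n =
      ∑ ij ∈ Finset.HasAntidiagonal.antidiagonal n, taylorCoeff φ ij.1 * taylorCoeff ψ ij.2 := by
  rw [taylorCoeff, iteratedDeriv_fun_mul hφ.contDiffAt hψ.contDiffAt,
    Finset.Nat.sum_antidiagonal_eq_sum_range_succ_mk, Finset.sum_div]
  refine Finset.sum_congr rfl fun i hi => ?_
  have hi : i ≤ n := Nat.lt_succ_iff.1 (Finset.mem_range.1 hi)
  simp only [taylorCoeff]
  rw [Nat.cast_choose ℂ hi]
  have h1 : (n.factorial : ℂ) ≠ 0 := by exact_mod_cast n.factorial_ne_zero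
  have h2 : (i.factorial : ℂ) ≠ 0 := by exact_mod_cast i.factorial_ne_zero
  have h3 : ((n - i).factorial : ℂ) ≠ 0 := by exact_mod_cast (n - i).factorial_ne_zero
  field_simp

theorem taylorCoeff_deriv (φ : ℝ → ℂ) (n : ℕ) :
    taylorCoeff (deriv φ) n = (n + 1) * taylorCoeff φ (n + 1) := by
  rw [taylorCoeff, taylorCoeff, ← iteratedDeriv_succ', Nat.factorial_succ]
  have h1 : (n.factorial : ℂ) ≠ 0 := by exact_mod_cast n.factorial_ne_zero
  have h2 : (n + 1 : ℂ) ≠ 0 := by exact_mod_cast n.succ_ne_zero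
  push_cast
  field_simp

theorem analyticAt_ofReal (t : ℝ) : AnalyticAt ℝ (fun t : ℝ => (t : ℂ)) t :=
  Complex.ofRealCLM.analyticAt t

theorem taylorCoeff_ofReal (n : ℕ) :
    taylorCoeff (fun t : ℝ => (t : ℂ)) n = if n = 1 then 1 else 0 := by
  have hd : deriv (fun t : ℝ => (t : ℂ)) = fun _ => 1 := by
    ext t; exact Complex.ofRealCLM.hasDerivAt.deriv.trans (by simp)
  rcases n with _ | _ | n
  · simp [taylorCoeff]
  · simp [taylorCoeff, hd]
  · rw [taylorCoeff, iteratedDeriv_succ', hd, iteratedDeriv_const]; simp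

theorem taylorCoeff_id_mul_succ {φ : ℝ → ℂ} (hφ : AnalyticAt ℝ φ 0) (n : ℕ) :
    taylorCoeff (fun t => (t : ℂ) * φ t) (n + 1) = taylorCoeff φ n := by
  rw [taylorCoeff_mul (analyticAt_ofReal 0) hφ, Finset.Nat.sum_antidiagonal_succ,
    taylorCoeff_ofReal]
  simp only [taylorCoeff_ofReal]
  rw [Finset.sum_eq_single (0, n)]
  · simp
  · rintro ⟨i, j⟩ hij hne
    rw [Finset.HasAntidiagonal.mem_antidiagonal] at hij
    have : i ≠ 0 := by
      rintro rfl
      exact hne (by simp at hij; simp [hij])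
    simp [this]
  · simp

theorem taylorCoeff_id_mul_zero (φ : ℝ → ℂ) : taylorCoeff (fun t => (t : ℂ) * φ t) 0 = 0 := by
  simp [taylorCoeff]

theorem taylorCoeff_id_mul_deriv {φ : ℝ → ℂ} (hφ : AnalyticAt ℝ φ 0) (n : ℕ) :
    taylorCoeff (fun t => (t : ℂ) * deriv φ t) n = n * taylorCoeff φ n := by
  rcases n with _ | n
  · simp [taylorCoeff_id_mul_zero]
  · rw [taylorCoeff_id_mul_succ hφ.deriv, taylorCoeff_deriv]; push_cast; ring

/-- Geometric bound for the Taylor coefficients of a solution of `γ' = b (γ - γ²)`. -/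
theorem norm_taylorCoeff_le_of_riccati {γ : ℝ → ℂ} (hγ : AnalyticAt ℝ γ 0) {b : ℂ} {b₀ β : ℝ}
    (hb : ‖b‖ ≤ b₀) (h0 : ‖γ 0‖ ≤ β)
    (h : deriv γ =ᶠ[nhds 0] fun t => b * (γ t - γ t * γ t)) (n : ℕ) :
    ‖taylorCoeff γ n‖ ≤ β * (b₀ * (1 + β)) ^ n := by
  have hβ : 0 ≤ β := (norm_nonneg _).trans h0
  have hb₀ : 0 ≤ b₀ := (norm_nonneg _).trans hb
  have hrec : ∀ n : ℕ, (n + 1) * taylorCoeff γ (n + 1) = b * (taylorCoeff γ n -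
      ∑ ij ∈ Finset.HasAntidiagonal.antidiagonal n, taylorCoeff γ ij.1 * taylorCoeff γ ij.2) := fun n => by
    rw [← taylorCoeff_deriv, taylorCoeff_congr h, taylorCoeff_const_mul (hγ.fun_sub (hγ.fun_mul hγ)),
      taylorCoeff_sub hγ (hγ.fun_mul hγ), taylorCoeff_mul hγ hγ]
  induction n using Nat.strong_induction_on with
  | _ n ih =>
    rcases n with _ | n
    · simpa [taylorCoeff_zero] using h0
    · set κ := b₀ * (1 + β) with hκ
      have hκ0 : 0 ≤ κ := by positivity
      have hsum : ‖∑ ij ∈ Finset.HasAntidiagonal.antidiagonal n, taylorCoeff γ ij.1 * taylorCoeff γ ij.2‖ ≤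
          (n + 1) * (β * β * κ ^ n) := by
        refine (norm_sum_le_of_le _ (n := fun _ => β * β * κ ^ n) fun ij hij => ?_).trans
          (by simp)
        rw [Finset.HasAntidiagonal.mem_antidiagonal] at hij
        rw [norm_mul]
        calc _ ≤ (β * κ ^ ij.1) * (β * κ ^ ij.2) := by
              gcongr
              · exact ih _ (by omega)
              · exact ih _ (by omega)
          _ = β * β * κ ^ n := by rw [← hij, pow_add]; ring
      have hn : (0 : ℝ) < n + 1 := by positivity
      have h1 : (n + 1) * ‖taylorCoeff γ (n + 1)‖ ≤ b₀ * (β * κ ^ n + (n + 1) * (β * β * κ ^ n)) := by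
        have := congrArg norm (hrec n)
        rw [norm_mul, norm_mul, show ‖(n + 1 : ℂ)‖ = n + 1 by
          exact_mod_cast Complex.norm_natCast (n + 1)] at this
        rw [this]
        gcongr
        exact (norm_sub_le _ _).trans (add_le_add (ih n (by omega)) hsum)
      have h2 : b₀ * (β * κ ^ n + (n + 1) * (β * β * κ ^ n)) ≤ (n + 1) * (β * κ ^ (n + 1)) := by
        have h3 : (n + 1) * (β * κ ^ (n + 1)) = b₀ * ((n + 1) * (β * κ ^ n) +
            (n + 1) * (β * β * κ ^ n)) := by rw [pow_succ, hκ]; ring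
        rw [h3]
        refine mul_le_mul_of_nonneg_left ?_ hb₀
        nlinarith [show 0 ≤ β * κ ^ n by positivity, (Nat.cast_nonneg n : (0 : ℝ) ≤ n),
          mul_nonneg (Nat.cast_nonneg n : (0 : ℝ) ≤ n) (show 0 ≤ β * κ ^ n by positivity)]
      exact le_of_mul_le_mul_left (h1.trans h2) hn

/-- Geometric bound for the Taylor coefficients of the solution of `t c' = c + b t c - c²` with
`c 0 = 1`. -/
theorem norm_taylorCoeff_le_of_bernoulli {c : ℝ → ℂ} (hc : AnalyticAt ℝ c 0) {b : ℂ} {b₀ : ℝ}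
    (hb : ‖b‖ ≤ b₀) (h0 : c 0 = 1)
    (h : (fun t : ℝ => (t : ℂ) * deriv c t) =ᶠ[nhds 0]
      fun t : ℝ => c t + b * ((t : ℂ) * c t) - c t * c t) (n : ℕ) :
    ‖taylorCoeff c n‖ ≤ b₀ ^ n := by
  have hb₀ : 0 ≤ b₀ := (norm_nonneg _).trans hb
  have hid := analyticAt_ofReal 0
  have hrec : ∀ n : ℕ, n * taylorCoeff c n = taylorCoeff c n +
      b * taylorCoeff (fun t => (t : ℂ) * c t) n -
      ∑ ij ∈ Finset.HasAntidiagonal.antidiagonal n, taylorCoeff c ij.1 * taylorCoeff c ij.2 := fun n => by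
    rw [← taylorCoeff_id_mul_deriv hc, taylorCoeff_congr h,
      taylorCoeff_sub (hc.fun_add (analyticAt_const.fun_mul (hid.fun_mul hc))) (hc.fun_mul hc),
      taylorCoeff_add hc (analyticAt_const.fun_mul (hid.fun_mul hc)),
      taylorCoeff_const_mul (hid.fun_mul hc), taylorCoeff_mul hc hc]
  have hc0 : taylorCoeff c 0 = 1 := by rw [taylorCoeff_zero, h0]
  induction n using Nat.strong_induction_on with
  | _ n ih =>
    rcases n with _ | _ | k
    · simp [hc0]
    · have := hrec 1
      rw [taylorCoeff_id_mul_succ hc, Finset.Nat.sum_antidiagonal_succ] at this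
      simp [hc0] at this
      have h2 : taylorCoeff c 1 = b / 2 := by linear_combination this / 2
      rw [show 0 + 1 = 1 from rfl, h2, pow_one, norm_div]
      norm_num
      linarith [norm_nonneg b]
    · have hr := hrec (k + 2)
      rw [taylorCoeff_id_mul_succ hc, Finset.Nat.sum_antidiagonal_succ,
        Finset.Nat.sum_antidiagonal_succ', hc0] at hr
      set S := ∑ ij ∈ Finset.HasAntidiagonal.antidiagonal k,
        taylorCoeff c (ij.1 + 1) * taylorCoeff c (ij.2 + 1) with hS
      have hr' : ((k + 3 : ℕ) : ℂ) * taylorCoeff c (k + 2) = b * taylorCoeff c (k + 1) - S := by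
        simp only [one_mul, mul_one] at hr
        push_cast at hr ⊢
        linear_combination hr
      have hsum : ‖S‖ ≤ (k + 1) * b₀ ^ (k + 2) := by
        refine (norm_sum_le_of_le _ (n := fun _ => b₀ ^ (k + 2)) fun ij hij => ?_).trans
          (by simp)
        rw [Finset.HasAntidiagonal.mem_antidiagonal] at hij
        rw [norm_mul]
        calc _ ≤ b₀ ^ (ij.1 + 1) * b₀ ^ (ij.2 + 1) := by
              gcongr
              · exact ih _ (by omega)
              · exact ih _ (by omega)
          _ = b₀ ^ (k + 2) := by rw [← hij, ← pow_add]; congr 1; ring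
      have h1 : ((k + 3 : ℕ) : ℝ) * ‖taylorCoeff c (k + 2)‖ ≤
          b₀ * b₀ ^ (k + 1) + (k + 1) * b₀ ^ (k + 2) := by
        have := congrArg norm hr'
        rw [norm_mul, Complex.norm_natCast] at this
        rw [this]
        refine (norm_sub_le _ _).trans (add_le_add ?_ hsum)
        rw [norm_mul]
        gcongr
        exact ih _ (by omega)
      have h2 : (0 : ℝ) < (k + 3 : ℕ) := by positivity
      refine le_of_mul_le_mul_left (h1.trans ?_) h2
      push_cast
      have : 0 ≤ b₀ ^ (k + 2) := by positivity
      rw [show b₀ * b₀ ^ (k + 1) = b₀ ^ (k + 2) by ring]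
      show _ ≤ ((k : ℝ) + 3) * b₀ ^ (k + 2)
      nlinarith

theorem abs_inv_one_sub_exp_neg_le {s : ℝ} (hs : s ≠ 0) :
    |(1 - Real.exp (-s))⁻¹| ≤ 1 + 1 / |s| := by
  rw [abs_inv]
  rcases lt_or_gt_of_ne hs with h | h
  · have h1 : -s ≤ |1 - Real.exp (-s)| := by
      rw [abs_sub_comm]
      exact (by linarith [Real.add_one_le_exp (-s)] : -s ≤ Real.exp (-s) - 1).trans (le_abs_self _)
    rw [abs_of_neg h]
    calc _ ≤ (-s)⁻¹ := inv_anti₀ (by linarith) h1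
      _ ≤ _ := by rw [one_div]; linarith
  · have h1 : s / (1 + s) ≤ |1 - Real.exp (-s)| := by
      refine le_trans ?_ (le_abs_self _)
      have h2 : Real.exp (-s) ≤ (1 + s)⁻¹ := by
        rw [Real.exp_neg]
        exact inv_anti₀ (by linarith) (by linarith [Real.add_one_le_exp s])
      have h3 : s / (1 + s) = 1 - (1 + s)⁻¹ := by field_simp; ring
      linarith
    rw [abs_of_pos h]
    calc _ ≤ (s / (1 + s))⁻¹ := inv_anti₀ (by positivity) h1
      _ = _ := by field_simp; ring

theorem one_sub_exp_neg_ne_zero {s : ℝ} (hs : s ≠ 0) : 1 - Real.exp (-s) ≠ 0 := by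
  intro h
  have h1 : Real.exp (-s) = 1 := by linarith
  exact hs (by simpa using h1)

/-- The singular coefficients of the Cherednik system along a line have geometrically bounded
Taylor coefficients and a nonnegative constant term. -/
theorem exists_coupling {s₀ b b₀ d : ℝ} (hd : 0 < d) (hs : s₀ = 0 ∨ d ≤ |s₀|) (hb : |b| ≤ b₀) :
    ∃ e : ℝ → ℂ, AnalyticAt ℝ e 0 ∧
      (∀ᶠ t in nhdsWithin (0 : ℝ) {0}ᶜ,
        e t = ((t * b / (1 - Real.exp (-(s₀ + t * b))) : ℝ) : ℂ)) ∧
      (∃ z : ℝ, 0 ≤ z ∧ taylorCoeff e 0 = z) ∧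
      ∀ m, ‖taylorCoeff e (m + 1)‖ ≤ b₀ * (1 + 1 / d) * (b₀ * (2 + 1 / d)) ^ m := by
  have hb₀ : 0 ≤ b₀ := (abs_nonneg _).trans hb
  have hnb : ‖(b : ℂ)‖ ≤ b₀ := by simpa using hb
  rcases hs with rfl | hs
  · by_cases hb0 : b = 0
    · refine ⟨fun _ => 0, analyticAt_const, ?_, ⟨0, le_rfl, by simp [taylorCoeff]⟩, fun m => ?_⟩
      · simp [hb0]
      · rw [taylorCoeff, iteratedDeriv_const]
        simp
        positivity
    · set q : ℝ → ℝ := fun t => 1 - Real.exp (-(t * b)) with hq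
      have hqa : AnalyticAt ℝ q 0 := by rw [hq]; fun_prop
      have hqd : ∀ t, HasDerivAt q (b * Real.exp (-(t * b))) t := fun t => by
        have h1 : HasDerivAt (fun t : ℝ => -(t * b)) (-b) t := by
          exact (hasDerivAt_mul_const b).fun_neg
        exact ((h1.exp).const_sub 1).congr_deriv (by ring)
      have hda : AnalyticAt ℝ (dslope q 0) 0 := by
        obtain ⟨p, hp⟩ := hqa
        exact hp.has_fpower_series_dslope_fslope.analyticAt
      have hd0 : dslope q 0 0 = b := by rw [dslope_same, (hqd 0).deriv]; simp
      have hra : AnalyticAt ℝ (fun t => b / dslope q 0 t) 0 :=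
        analyticAt_const.fun_div hda (by rw [hd0]; exact hb0)
      set e : ℝ → ℂ := fun t => ((b / dslope q 0 t : ℝ) : ℂ) with he
      have hea : AnalyticAt ℝ e 0 := (Complex.ofRealCLM.analyticAt _).comp hra
      have het : ∀ t, t ≠ 0 → e t = ((t * b / (1 - Real.exp (-(t * b))) : ℝ) : ℂ) := by
        intro t ht
        rw [he]
        simp only [dslope_of_ne _ ht, slope_def_field]
        congr 1
        have h0 : q 0 = 0 := by simp [hq]
        rw [h0, sub_zero, sub_zero, div_div_eq_mul_div, mul_comm]
      have he0 : e 0 = 1 := by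
        simp only [he, hd0, div_self hb0, Complex.ofReal_one]
      have hode : (fun t : ℝ => (t : ℂ) * deriv e t) =ᶠ[nhds 0]
          fun t : ℝ => e t + b * ((t : ℂ) * e t) - e t * e t := by
        refine Filter.Eventually.of_forall fun t => ?_
        by_cases ht : t = 0
        · simp [ht, he0]
        have hne : (1 - Real.exp (-(t * b))) ≠ 0 := one_sub_exp_neg_ne_zero (mul_ne_zero ht hb0)
        have hder : HasDerivAt (fun t : ℝ => t * b / (1 - Real.exp (-(t * b)))) _ t :=
          ((hasDerivAt_id t).mul_const b).fun_div (hqd t) hne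
        have hev : e =ᶠ[nhds t] fun t => ((t * b / (1 - Real.exp (-(t * b))) : ℝ) : ℂ) := by
          filter_upwards [isOpen_ne.mem_nhds ht] with u hu using het u hu
        have hder' : deriv e t = _ := hev.deriv_eq.trans hder.ofReal_comp.deriv
        simp only [hder', het t ht]
        norm_cast
        simp only [id]
        field_simp
        ring
      refine ⟨e, hea, ?_, ⟨1, zero_le_one, by simp [taylorCoeff_zero, he0]⟩, fun m => ?_⟩
      · filter_upwards [self_mem_nhdsWithin] with t ht
        rw [zero_add]
        exact het t ht
      · have h1 := norm_taylorCoeff_le_of_bernoulli hea hnb he0 hode (m + 1)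
        refine h1.trans ?_
        rw [pow_succ, mul_comm]
        have hd' : 0 ≤ 1 / d := by positivity
        have h3 : b₀ ≤ b₀ * (2 + 1 / d) := le_mul_of_one_le_right hb₀ (by linarith)
        have h4 : b₀ ≤ b₀ * (1 + 1 / d) := le_mul_of_one_le_right hb₀ (by linarith)
        gcongr
  · have hs0 : s₀ ≠ 0 := fun h => by rw [h, abs_zero] at hs; linarith
    set q : ℝ → ℝ := fun t => 1 - Real.exp (-(s₀ + t * b)) with hq
    have hq0 : q 0 ≠ 0 := by simpa [hq] using one_sub_exp_neg_ne_zero hs0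
    have hqa : AnalyticAt ℝ q 0 := by rw [hq]; fun_prop
    have hqd : ∀ t, HasDerivAt q (b * Real.exp (-(s₀ + t * b))) t := fun t => by
      have h1 : HasDerivAt (fun t : ℝ => -(s₀ + t * b)) (-b) t := by
        exact ((hasDerivAt_mul_const b).const_add s₀).fun_neg
      exact ((h1.exp).const_sub 1).congr_deriv (by ring)
    set γ : ℝ → ℂ := fun t => ((q t)⁻¹ : ℝ) with hγ
    have hγa : AnalyticAt ℝ γ 0 := (Complex.ofRealCLM.analyticAt _).comp (hqa.fun_inv hq0)
    have hγ0 : ‖γ 0‖ ≤ 1 + 1 / d := by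
      simp only [hγ, hq, Complex.norm_real, zero_mul, add_zero, Real.norm_eq_abs]
      refine (abs_inv_one_sub_exp_neg_le hs0).trans ?_
      gcongr
    have hode : deriv γ =ᶠ[nhds 0] fun t => (b : ℂ) * (γ t - γ t * γ t) := by
      filter_upwards [hqa.continuousAt.eventually_ne hq0] with t ht
      rw [hγ, ((hqd t).fun_inv ht).ofReal_comp.deriv]
      simp only [← Complex.ofReal_mul, ← Complex.ofReal_sub]
      congr 1
      field_simp
      simp only [hq]
      ring_nf
    have hg := norm_taylorCoeff_le_of_riccati hγa hnb hγ0 hode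
    have hbg : AnalyticAt ℝ (fun t => (b : ℂ) * γ t) 0 := analyticAt_const.fun_mul hγa
    refine ⟨fun t : ℝ => (t : ℂ) * ((b : ℂ) * γ t), (analyticAt_ofReal 0).fun_mul hbg, ?_,
      ⟨0, le_rfl, by simp [taylorCoeff_zero]⟩, fun m => ?_⟩
    · refine Filter.Eventually.of_forall fun t => ?_
      simp only [hγ, hq]
      push_cast
      rw [div_eq_mul_inv, mul_assoc]
    · rw [taylorCoeff_id_mul_succ hbg, taylorCoeff_const_mul hγa, norm_mul]
      calc _ ≤ b₀ * ((1 + 1 / d) * (b₀ * (1 + (1 + 1 / d))) ^ m) := by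
            gcongr
            exact hg m
        _ = _ := by ring

/-- Geometric bound for the Taylor coefficients of a solution of a cooperative system with a
regular singularity at `0`. -/
theorem norm_taylorCoeff_le_of_fuchsian {ι J : Type*} [Finite ι] [Nonempty ι] (s : Finset J)
    (σ : J → ι → ι) {k : J → ℝ} (hk : ∀ j ∈ s, 0 ≤ k j) {e : J → ι → ℝ → ℂ} {H κ M M₀ : ℝ}
    (hea : ∀ j ∈ s, ∀ w, AnalyticAt ℝ (e j w) 0) (hH : 0 ≤ H) (hκ : 0 ≤ κ)
    (he0 : ∀ j ∈ s, ∀ w, ∃ z : ℝ, 0 ≤ z ∧ taylorCoeff (e j w) 0 = z)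
    (he : ∀ j ∈ s, ∀ w m, ‖taylorCoeff (e j w) (m + 1)‖ ≤ H * κ ^ m)
    {φ : ι → ℝ → ℂ} (hφ : ∀ w, AnalyticAt ℝ (φ w) 0) {μ : ι → ℂ} (hμ : ∀ w, ‖μ w‖ ≤ M)
    (hode : ∀ w, ∀ᶠ t : ℝ in nhdsWithin 0 {0}ᶜ, (t : ℂ) * deriv (φ w) t =
      ∑ j ∈ s, (k j : ℂ) * (e j w t * (φ (σ j w) t - φ w t)) + (t : ℂ) * (μ w * φ w t))
    (h0 : ∀ w, ‖φ w 0‖ ≤ M₀) (w : ι) (n : ℕ) :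
    ‖taylorCoeff (φ w) n‖ ≤ (κ + 2 * (∑ j ∈ s, k j) * H + M) ^ n * M₀ := by
  have hK : 0 ≤ ∑ j ∈ s, k j := Finset.sum_nonneg hk
  set K := ∑ j ∈ s, k j with hKdef
  have hM : 0 ≤ M := (norm_nonneg _).trans (hμ w)
  have hM₀ : 0 ≤ M₀ := (norm_nonneg _).trans (h0 w)
  set A := κ + 2 * K * H + M with hA
  have hA0 : 0 ≤ A := by positivity
  have hκA : κ ≤ A := by
    have : 0 ≤ 2 * K * H := by positivity
    linarith
  have hdiff : ∀ j w, AnalyticAt ℝ (fun t => φ (σ j w) t - φ w t) 0 := fun j w =>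
    (hφ _).fun_sub (hφ _)
  have hprod : ∀ j ∈ s, ∀ w, AnalyticAt ℝ (fun t => e j w t * (φ (σ j w) t - φ w t)) 0 :=
    fun j hj w => (hea j hj w).fun_mul (hdiff j w)
  have hkprod : ∀ j ∈ s, ∀ w,
      AnalyticAt ℝ (fun t => (k j : ℂ) * (e j w t * (φ (σ j w) t - φ w t))) 0 :=
    fun j hj w => analyticAt_const.fun_mul (hprod j hj w)
  have hsuma : ∀ w, AnalyticAt ℝ
      (fun t => ∑ j ∈ s, (k j : ℂ) * (e j w t * (φ (σ j w) t - φ w t))) 0 := fun w =>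
    Finset.analyticAt_fun_sum _ fun j hj => hkprod j hj w
  have hμφ : ∀ w, AnalyticAt ℝ (fun t => μ w * φ w t) 0 := fun w =>
    analyticAt_const.fun_mul (hφ w)
  have htμφ : ∀ w, AnalyticAt ℝ (fun t : ℝ => (t : ℂ) * (μ w * φ w t)) 0 := fun w =>
    (analyticAt_ofReal 0).fun_mul (hμφ w)
  have hode' : ∀ w, (fun t : ℝ => (t : ℂ) * deriv (φ w) t) =ᶠ[nhds 0] fun t : ℝ =>
      ∑ j ∈ s, (k j : ℂ) * (e j w t * (φ (σ j w) t - φ w t)) + (t : ℂ) * (μ w * φ w t) := fun w =>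
    (ContinuousAt.eventuallyEq_nhds_iff_eventuallyEq_nhdsNE
      ((analyticAt_ofReal 0).fun_mul (hφ w).deriv).continuousAt
      ((hsuma w).fun_add (htμφ w)).continuousAt).1 (hode w)
  have hrec : ∀ w (n : ℕ), ((n + 1 : ℕ) : ℂ) * taylorCoeff (φ w) (n + 1) =
      ∑ j ∈ s, (k j : ℂ) * (taylorCoeff (e j w) 0 *
          (taylorCoeff (φ (σ j w)) (n + 1) - taylorCoeff (φ w) (n + 1)) +
        ∑ il ∈ Finset.HasAntidiagonal.antidiagonal n, taylorCoeff (e j w) (il.1 + 1) *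
          (taylorCoeff (φ (σ j w)) il.2 - taylorCoeff (φ w) il.2)) +
      μ w * taylorCoeff (φ w) n := by
    intro w n
    rw [← taylorCoeff_id_mul_deriv (hφ w), taylorCoeff_congr (hode' w),
      taylorCoeff_add (hsuma w) (htμφ w), taylorCoeff_sum s fun j hj => hkprod j hj w,
      taylorCoeff_id_mul_succ (hμφ w), taylorCoeff_const_mul (hφ w)]
    congr 1
    refine Finset.sum_congr rfl fun j hj => ?_
    rw [taylorCoeff_const_mul (hprod j hj w), taylorCoeff_mul (hea j hj w) (hdiff j w),
      Finset.Nat.sum_antidiagonal_succ]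
    simp only [taylorCoeff_sub (hφ _) (hφ _)]
  induction n using Nat.strong_induction_on generalizing w with
  | _ n ih =>
    rcases n with _ | n
    · simpa [taylorCoeff_zero] using h0 w
    · obtain ⟨v, hv⟩ := Finite.exists_max fun w => ‖taylorCoeff (φ w) (n + 1)‖
      refine (hv w).trans ?_
      choose! z hz0 hz using fun j hj => he0 j hj v
      set Z := ∑ j ∈ s, k j * z j with hZ
      have hZ0 : 0 ≤ Z := Finset.sum_nonneg fun j hj => mul_nonneg (hk j hj) (hz0 j hj)
      set S : J → ℂ := fun j => ∑ il ∈ Finset.HasAntidiagonal.antidiagonal n,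
        taylorCoeff (e j v) (il.1 + 1) *
          (taylorCoeff (φ (σ j v)) il.2 - taylorCoeff (φ v) il.2) with hS
      have hSle : ∀ j ∈ s, ‖S j‖ ≤ (n + 1) * (2 * H * (A ^ n * M₀)) := by
        intro j hj
        refine (norm_sum_le_of_le _ (n := fun _ => 2 * H * (A ^ n * M₀))
          fun il hil => ?_).trans (by simp)
        rw [Finset.HasAntidiagonal.mem_antidiagonal] at hil
        rw [norm_mul]
        calc _ ≤ (H * A ^ il.1) * (A ^ il.2 * M₀ + A ^ il.2 * M₀) := by
              gcongr
              · exact (he j hj v _).trans (by gcongr)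
              · exact (norm_sub_le _ _).trans
                  (add_le_add (ih _ (by omega) _) (ih _ (by omega) _))
          _ = _ := by rw [← hil, pow_add]; ring
      have hr : (((n + 1 : ℕ) + Z : ℝ) : ℂ) * taylorCoeff (φ v) (n + 1) =
          ∑ j ∈ s, ((k j * z j : ℝ) : ℂ) * taylorCoeff (φ (σ j v)) (n + 1) +
          (∑ j ∈ s, (k j : ℂ) * S j + μ v * taylorCoeff (φ v) n) := by
        have h1 := hrec v n
        have h2 : ∑ j ∈ s, (k j : ℂ) * (taylorCoeff (e j v) 0 *
            (taylorCoeff (φ (σ j v)) (n + 1) - taylorCoeff (φ v) (n + 1)) + S j) =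
            ∑ j ∈ s, ((k j * z j : ℝ) : ℂ) * taylorCoeff (φ (σ j v)) (n + 1) -
            (Z : ℂ) * taylorCoeff (φ v) (n + 1) + ∑ j ∈ s, (k j : ℂ) * S j := by
          rw [hZ, Complex.ofReal_sum, Finset.sum_mul, ← Finset.sum_sub_distrib,
            ← Finset.sum_add_distrib]
          refine Finset.sum_congr rfl fun j hj => ?_
          rw [hz j hj]
          push_cast
          ring
        rw [h2] at h1
        push_cast at h1 ⊢
        linear_combination h1
      set a := ‖taylorCoeff (φ v) (n + 1)‖ with ha
      have h3 : ((n + 1 : ℕ) + Z) * a ≤ Z * a + (K * ((n + 1) * (2 * H * (A ^ n * M₀))) +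
          M * (A ^ n * M₀)) := by
        have h4 := congrArg norm hr
        rw [norm_mul, Complex.norm_real, Real.norm_of_nonneg (by positivity)] at h4
        rw [h4]
        refine (norm_add_le _ _).trans (add_le_add ?_ ((norm_add_le _ _).trans
          (add_le_add ?_ ?_)))
        · rw [hZ, Finset.sum_mul]
          refine norm_sum_le_of_le _ fun j hj => ?_
          rw [norm_mul, Complex.norm_real,
            Real.norm_of_nonneg (mul_nonneg (hk j hj) (hz0 j hj))]
          exact mul_le_mul_of_nonneg_left (hv _) (mul_nonneg (hk j hj) (hz0 j hj))
        · rw [hKdef, Finset.sum_mul]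
          refine norm_sum_le_of_le _ fun j hj => ?_
          rw [norm_mul, Complex.norm_real, Real.norm_of_nonneg (hk j hj)]
          exact mul_le_mul_of_nonneg_left (hSle j hj) (hk j hj)
        · rw [norm_mul]
          gcongr
          · exact hμ v
          · exact ih _ (by omega) _
      have hP : 0 ≤ A ^ n * M₀ := by positivity
      have hn : (0 : ℝ) ≤ n := n.cast_nonneg
      refine le_of_mul_le_mul_left (a := (n + 1 : ℝ)) ?_ (by positivity)
      calc (n + 1 : ℝ) * a ≤ K * ((n + 1) * (2 * H * (A ^ n * M₀))) + M * (A ^ n * M₀) := by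
            push_cast at h3
            linarith
        _ ≤ K * ((n + 1) * (2 * H * (A ^ n * M₀))) + (n + 1) * (M * (A ^ n * M₀)) := by
            refine add_le_add le_rfl ?_
            nlinarith [mul_nonneg hn (mul_nonneg hM hP)]
        _ ≤ (n + 1) * (κ * (A ^ n * M₀)) + K * ((n + 1) * (2 * H * (A ^ n * M₀))) +
            (n + 1) * (M * (A ^ n * M₀)) := by
            have : 0 ≤ (n + 1) * (κ * (A ^ n * M₀)) := by positivity
            linarith
        _ = (n + 1) * (A ^ (n + 1) * M₀) := by rw [pow_succ, hA]; ring

/-- Polarization: the symmetrization of a multilinear map is determined by its values on the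
diagonal. -/
theorem MultilinearMap.sum_perm_eq_sum_finset {V F : Type*} [AddCommGroup V] [Module ℝ V]
    [AddCommGroup F] [Module ℝ F] {n : ℕ} (P : MultilinearMap ℝ (fun _ : Fin n => V) F)
    (v : Fin n → V) :
    ∑ σ : Equiv.Perm (Fin n), P (fun i => v (σ i)) =
      ∑ s : Finset (Fin n), (-1 : ℤ) ^ sᶜ.card • P (fun _ => ∑ i ∈ s, v i) := by
  have h1 : ∀ s : Finset (Fin n), P (fun _ => ∑ i ∈ s, v i) =
      ∑ r : Fin n → Fin n, if Finset.univ.image r ⊆ s then P (fun i => v (r i)) else 0 := by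
    intro s
    rw [P.map_sum_finset (fun _ => v) (fun _ => s), ← Finset.sum_filter]
    refine Finset.sum_congr ?_ fun _ _ => rfl
    ext r
    simp [Fintype.mem_piFinset, Finset.image_subset_iff]
  have h2 : ∀ r : Fin n → Fin n, ∑ s : Finset (Fin n),
      (if Finset.univ.image r ⊆ s then (-1 : ℤ) ^ sᶜ.card else 0) =
      if Function.Bijective r then 1 else 0 := by
    intro r
    have h3 : ∑ s : Finset (Fin n), (if Finset.univ.image r ⊆ s then (-1 : ℤ) ^ sᶜ.card else 0) =
        ∑ t ∈ (Finset.univ.image r)ᶜ.powerset, (-1 : ℤ) ^ t.card := by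
      rw [← Finset.sum_filter]
      refine Finset.sum_nbij' (fun s => sᶜ) (fun t => tᶜ) ?_ ?_ ?_ ?_ ?_
      · intro s hs
        simpa using hs
      · intro t ht
        simp only [Finset.mem_powerset] at ht
        simpa using Finset.subset_compl_comm.1 ht
      · simp
      · simp
      · simp
    rw [h3, Finset.sum_powerset_neg_one_pow_card]
    refine if_congr ?_ rfl rfl
    rw [← Finite.surjective_iff_bijective, Finset.compl_eq_empty_iff, Finset.eq_univ_iff_forall]
    simp [Function.Surjective]
  simp only [h1, Finset.smul_sum]
  rw [Finset.sum_comm]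
  have h4 : ∀ r : Fin n → Fin n, ∑ s : Finset (Fin n), (-1 : ℤ) ^ sᶜ.card •
      (if Finset.univ.image r ⊆ s then P (fun i => v (r i)) else 0) =
      if Function.Bijective r then P (fun i => v (r i)) else 0 := by
    intro r
    rw [← one_smul ℤ (P fun i => v (r i)), ← ite_zero_smul, ← h2 r, Finset.sum_smul]
    refine Finset.sum_congr rfl fun s _ => ?_
    split_ifs <;> simp
  simp only [h4]
  rw [← Finset.sum_filter]
  refine Finset.sum_bij (fun σ _ => σ) ?_ ?_ ?_ ?_
  · intro σ _
    exact Finset.mem_filter.2 ⟨Finset.mem_univ _, σ.bijective⟩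
  · intro σ _ τ _ h
    exact DFunLike.coe_injective h
  · intro r hr
    exact ⟨Equiv.ofBijective r (Finset.mem_filter.1 hr).2, Finset.mem_univ _, rfl⟩
  · intros
    rfl

theorem ContinuousMultilinearMap.opNorm_le_of_unit {V F : Type*} [NormedAddCommGroup V]
    [NormedSpace ℝ V] [NormedAddCommGroup F] [NormedSpace ℝ F] {n : ℕ}
    (g : ContinuousMultilinearMap ℝ (fun _ : Fin n => V) F) {C : ℝ} (hC : 0 ≤ C)
    (h : ∀ v : Fin n → V, (∀ i, ‖v i‖ ≤ 1) → ‖g v‖ ≤ C) : ‖g‖ ≤ C := by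
  refine g.opNorm_le_bound hC fun v => ?_
  have hv : v = fun i => ‖v i‖ • (‖v i‖⁻¹ • v i) := by
    ext i
    by_cases hi : v i = 0
    · simp [hi]
    · rw [smul_smul, mul_inv_cancel₀ (norm_ne_zero_iff.2 hi), one_smul]
  conv_lhs => rw [hv]
  rw [g.map_smul_univ, norm_smul, mul_comm, Real.norm_of_nonneg (by positivity)]
  gcongr
  refine h _ fun i => ?_
  rw [norm_smul, norm_inv, norm_norm]
  exact inv_mul_le_one

/-- Bounds on the diagonal of the iterated derivatives give bounds on their operator norms. -/
theorem norm_iteratedFDeriv_le_of_diagonal {V F : Type*} [NormedAddCommGroup V]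
    [NormedSpace ℝ V] [NormedAddCommGroup F] [NormedSpace ℝ F]
    [CompleteSpace F] {f : V → F} {p : V}
    (hf : AnalyticAt ℝ f p) {A M₀ : ℝ} {n : ℕ} (hA : 0 ≤ A) (hM : 0 ≤ M₀)
    (h : ∀ y, ‖y‖ ≤ 1 → ‖iteratedFDeriv ℝ n f p (fun _ => y)‖ ≤ n.factorial * (A ^ n * M₀)) :
    ‖iteratedFDeriv ℝ n f p‖ ≤ n.factorial * ((2 * Real.exp 1 * A) ^ n * M₀) := by
  obtain ⟨P, r, hP⟩ := hf
  refine ContinuousMultilinearMap.opNorm_le_of_unit _ (by positivity) fun v hv => ?_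
  rw [hP.iteratedFDeriv_eq_sum_of_completeSpace]
  have := (P n).toMultilinearMap.sum_perm_eq_sum_finset v
  simp only [ContinuousMultilinearMap.coe_coe] at this
  rw [this]
  have hfac : (0 : ℝ) < n.factorial := by exact_mod_cast n.factorial_pos
  have hs : ∀ s : Finset (Fin n), ‖P n (fun _ => ∑ i ∈ s, v i)‖ ≤ (n : ℝ) ^ n * (A ^ n * M₀) := by
    intro s
    have hz : ‖∑ i ∈ s, v i‖ ≤ n := by
      refine (norm_sum_le_of_le _ (n := fun _ => (1 : ℝ)) fun i _ => hv i).trans ?_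
      simpa using (Finset.card_le_univ s).trans (by simp)
    set z := ∑ i ∈ s, v i with hzdef
    have h1 := congrArg norm (hP.factorial_smul z n)
    rw [← Nat.cast_smul_eq_nsmul ℝ, norm_smul, Real.norm_of_nonneg hfac.le] at h1
    have hzn : z = (n : ℝ) • ((n : ℝ)⁻¹ • z) := by
      by_cases hn : (n : ℝ) = 0
      · rw [hn] at hz
        rw [norm_le_zero_iff.1 hz]; simp
      · rw [smul_smul, mul_inv_cancel₀ hn, one_smul]
    have h2 : ‖iteratedFDeriv ℝ n f p (fun _ => z)‖ ≤
        n.factorial * ((n : ℝ) ^ n * (A ^ n * M₀)) := by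
      rw [hzn, ContinuousMultilinearMap.map_smul_univ, norm_smul]
      simp only [Finset.prod_const, Finset.card_univ, Fintype.card_fin, norm_pow,
        Real.norm_natCast]
      calc _ ≤ (n : ℝ) ^ n * (n.factorial * (A ^ n * M₀)) := by
            gcongr
            refine h _ ?_
            rw [norm_smul, norm_inv, Real.norm_natCast]
            rcases Nat.eq_zero_or_pos n with rfl | hn
            · simp
            · rw [inv_mul_le_iff₀ (by exact_mod_cast hn), mul_one]
              exact hz
        _ = _ := by ring
    rw [← h1] at h2
    exact le_of_mul_le_mul_left h2 hfac
  refine (norm_sum_le_of_le _ (n := fun _ => (n : ℝ) ^ n * (A ^ n * M₀)) fun s _ => ?_).trans ?_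
  · rw [← Int.cast_smul_eq_zsmul ℝ, norm_smul]
    simpa using hs s
  · have h3 := Real.pow_div_factorial_le_exp (n : ℝ) n.cast_nonneg n
    rw [div_le_iff₀ hfac] at h3
    have h4 : Real.exp n = Real.exp 1 ^ n := by rw [← Real.exp_nat_mul, mul_one]
    rw [h4] at h3
    simp only [Finset.sum_const, Finset.card_univ, Fintype.card_finset, Fintype.card_fin,
      nsmul_eq_mul]
    push_cast
    calc (2 : ℝ) ^ n * ((n : ℝ) ^ n * (A ^ n * M₀))
        ≤ 2 ^ n * ((Real.exp 1 ^ n * n.factorial) * (A ^ n * M₀)) := by gcongr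
      _ = _ := by rw [mul_pow, mul_pow]; ring

/-- The Taylor series of an entire real analytic function represents it on every ball on which
geometric bounds guarantee convergence. -/
theorem hasFPowerSeriesOnBall_taylor {V F : Type*} [NormedAddCommGroup V]
    [NormedSpace ℝ V] [NormedAddCommGroup F] [NormedSpace ℝ F]
    [CompleteSpace F] {f : V → F} (hf : AnalyticOnNhd ℝ f Set.univ) (p : V) {B M₀ : ℝ}
    (hB : 0 < B)
    (h : ∀ n, ‖iteratedFDeriv ℝ n f p‖ ≤ n.factorial * (B ^ n * M₀)) :
    HasFPowerSeriesOnBall f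
      (fun n => ((n.factorial : ℝ)⁻¹) • iteratedFDeriv ℝ n f p) p (ENNReal.ofReal B⁻¹) := by
  set P : FormalMultilinearSeries ℝ V F := fun n => ((n.factorial : ℝ)⁻¹) • iteratedFDeriv ℝ n f p
    with hP
  have hPn : ∀ n, ‖P n‖ ≤ B ^ n * M₀ := by
    intro n
    have hfac : (0 : ℝ) < n.factorial := by exact_mod_cast n.factorial_pos
    rw [hP, norm_smul, norm_inv, Real.norm_natCast, inv_mul_le_iff₀ hfac]
    exact h n
  have hrad : ENNReal.ofReal B⁻¹ ≤ P.radius := by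
    refine P.le_radius_of_bound M₀ fun n => ?_
    rw [Real.coe_toNNReal _ (by positivity)]
    calc _ ≤ (B ^ n * M₀) * B⁻¹ ^ n := by gcongr; exact hPn n
      _ = M₀ := by rw [inv_pow]; field_simp
  have hrpos : 0 < ENNReal.ofReal B⁻¹ := ENNReal.ofReal_pos.2 (by positivity)
  have hsum := ((P.hasFPowerSeriesOnBall (hrpos.trans_le hrad)).comp_sub p).mono hrpos hrad
  rw [zero_add] at hsum
  refine hsum.congr ?_
  obtain ⟨Q, r, hQ⟩ := hf p (Set.mem_univ p)
  have hball : Metric.eball p (ENNReal.ofReal B⁻¹) = Metric.ball p B⁻¹ := by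
    rw [Metric.eball_ofReal]
  rw [hball]
  refine AnalyticOnNhd.eqOn_of_preconnected_of_eventuallyEq (z₀ := p) ?_
    (hf.mono (Set.subset_univ _)) (convex_ball _ _).isPreconnected
    (Metric.mem_ball_self (by positivity)) ?_
  · rw [← hball]; exact hsum.analyticOnNhd
  · filter_upwards [Metric.eball_mem_nhds p hQ.r_pos,
      Metric.eball_mem_nhds p hrpos] with z hz hz'
    have h1 := hQ.hasSum_iteratedFDeriv (y := z - p) (by simpa [edist_eq_enorm_sub] using hz)
    have h2 := hsum.hasSum (y := z - p) (by simpa [edist_eq_enorm_sub, dist_eq_norm] using hz')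
    rw [add_sub_cancel] at h1 h2
    exact h2.unique (by simpa [hP] using h1)

/-- Cauchy-type estimate: geometric bounds for the Taylor coefficients at `p` propagate to nearby
points. -/
theorem norm_iteratedFDeriv_le_of_taylor {V F : Type*} [NormedAddCommGroup V]
    [NormedSpace ℝ V] [NormedAddCommGroup F] [NormedSpace ℝ F]
    [CompleteSpace F] {f : V → F} (hf : AnalyticOnNhd ℝ f Set.univ) {p y : V} {B M₀ : ℝ}
    (hB : 0 < B) (hM : 0 ≤ M₀)
    (h : ∀ n, ‖iteratedFDeriv ℝ n f p‖ ≤ n.factorial * (B ^ n * M₀))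
    (hy : ‖y‖ ≤ 1 / (4 * B)) (N : ℕ) (ξ : Fin N → V) (hξ : ∀ i, ‖ξ i‖ ≤ 1) :
    ‖iteratedFDeriv ℝ N f (p + y) ξ‖ ≤ N.factorial * (2 * ((2 * B) ^ N * M₀)) := by
  have hS := hasFPowerSeriesOnBall_taylor hf p hB h
  set P : FormalMultilinearSeries ℝ V F := fun n => ((n.factorial : ℝ)⁻¹) • iteratedFDeriv ℝ n f p
    with hP
  have hPn : ∀ n, ‖P n‖ ≤ B ^ n * M₀ := by
    intro n
    have hfac : (0 : ℝ) < n.factorial := by exact_mod_cast n.factorial_pos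
    rw [hP, norm_smul, norm_inv, Real.norm_natCast, inv_mul_le_iff₀ hfac]
    exact h n
  have hyB : B * ‖y‖ ≤ 1 / 4 := by
    calc B * ‖y‖ ≤ B * (1 / (4 * B)) := by gcongr
      _ = 1 / 4 := by field_simp
  have hyr : ‖y‖ₑ < ENNReal.ofReal B⁻¹ := by
    rw [← ofReal_norm, ENNReal.ofReal_lt_ofReal_iff (by positivity)]
    refine hy.trans_lt ?_
    rw [one_div]
    exact inv_strictAnti₀ hB (by linarith)
  have hch := hS.changeOrigin (y := y) hyr
  have hterm : ∀ l, ‖P.changeOriginSeries N l fun _ => y‖ ≤ (2 * B) ^ N * M₀ * (1 / 2) ^ l := by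
    intro l
    have h1 := P.nnnorm_changeOriginSeries_apply_le_tsum N l y
    rw [tsum_fintype, Finset.sum_const, Finset.card_univ, Fintype.card_finset_len,
      Fintype.card_fin, nsmul_eq_mul] at h1
    have h2 : ‖P.changeOriginSeries N l fun _ => y‖ ≤
        ((N + l).choose l : ℝ) * (‖P (N + l)‖ * ‖y‖ ^ l) := by exact_mod_cast h1
    refine h2.trans ?_
    have h3 : ((N + l).choose l : ℝ) ≤ 2 ^ (N + l) := by
      exact_mod_cast Nat.choose_le_two_pow (N + l) l
    calc _ ≤ (2 : ℝ) ^ (N + l) * ((B ^ (N + l) * M₀) * ‖y‖ ^ l) := by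
          gcongr
          exact hPn _
      _ = (2 * B) ^ N * M₀ * (2 * (B * ‖y‖)) ^ l := by
          simp only [pow_add, mul_pow]; ring
      _ ≤ _ := by
          gcongr
          linarith
  have hN : ‖P.changeOrigin y N‖ ≤ 2 * ((2 * B) ^ N * M₀) := by
    refine (tsum_of_norm_bounded (hasSum_geometric_two.mul_left _) hterm).trans_eq ?_
    ring
  rw [hch.iteratedFDeriv_eq_sum_of_completeSpace]
  refine (norm_sum_le_of_le _ (n := fun _ => 2 * ((2 * B) ^ N * M₀)) fun σ _ => ?_).trans_eq ?_
  · refine ((P.changeOrigin y N).le_opNorm _).trans ?_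
    refine (mul_le_of_le_one_right (norm_nonneg _) ?_).trans hN
    exact Finset.prod_le_one (fun i _ => norm_nonneg _) fun i _ => hξ _
  · simp [Fintype.card_perm]

/-- Iterated derivatives along a line. -/
theorem iteratedDeriv_comp_line {V F : Type*} [NormedAddCommGroup V]
    [NormedSpace ℝ V] [NormedAddCommGroup F] [NormedSpace ℝ F]
    {f : V → F} (hf : ContDiff ℝ ⊤ f) (p y : V) (n : ℕ) (t : ℝ) :
    iteratedDeriv n (fun s : ℝ => f (p + s • y)) t =
      iteratedFDeriv ℝ n f (p + t • y) (fun _ => y) := by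
  induction n generalizing t with
  | zero => simp
  | succ n ih =>
    rw [iteratedDeriv_succ, funext ih]
    exact (hf.contDiffAt.of_le le_top).deriv_fderiv_add_smul

/-- Every point `x` is close to a point `p` at which each linear form of a finite family is either
zero or bounded below at a scale `d` comparable to a prescribed `δ`. -/
theorem exists_adapted_point {V : Type*} [NormedAddCommGroup V] [InnerProductSpace ℝ V]
    (R : Finset V) {ε : ℝ} (hε : 0 < ε) :
    ∃ c : ℝ, 0 < c ∧ ∀ δ : ℝ, 0 < δ → ∀ x : V, ∃ (p : V) (d : ℝ), c * δ ≤ d ∧ d ≤ δ ∧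
      ‖x - p‖ ≤ ε * d ∧ ∀ β ∈ R, ⟪β, p⟫ = 0 ∨ d ≤ |⟪β, p⟫| := by
  have key : ∀ n : ℕ, ∀ ε : ℝ, 0 < ε → ∃ c : ℝ, 0 < c ∧ c ≤ 1 ∧ ∀ δ : ℝ, 0 < δ → ∀ x : V,
      (R.filter fun β => ⟪β, x⟫ ≠ 0).card ≤ n → ∃ (p : V) (d : ℝ), c * δ ≤ d ∧ d ≤ δ ∧
      ‖x - p‖ ≤ ε * d ∧ ∀ β ∈ R, ⟪β, p⟫ = 0 ∨ d ≤ |⟪β, p⟫| := by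
    intro n
    induction n with
    | zero =>
      intro ε hε
      refine ⟨1, one_pos, le_rfl, fun δ hδ x hx => ⟨x, δ, by simp, le_rfl, ?_, fun β hβ => ?_⟩⟩
      · simpa using by positivity
      · rw [Nat.le_zero, Finset.card_eq_zero, Finset.filter_eq_empty_iff] at hx
        exact Or.inl (by simpa using hx hβ)
    | succ n ih =>
      intro ε hε
      obtain ⟨c', hc', hc'1, h'⟩ := ih (ε / 2) (half_pos hε)
      have hv : ∀ q : Finset V × V, ∃ v : V,
          (∃ v : V, (∀ α ∈ q.1, ⟪α, v⟫ = 0) ∧ ⟪q.2, v⟫ = 1) →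
          (∀ α ∈ q.1, ⟪α, v⟫ = 0) ∧ ⟪q.2, v⟫ = 1 := by
        intro q
        by_cases h : ∃ v : V, (∀ α ∈ q.1, ⟪α, v⟫ = 0) ∧ ⟪q.2, v⟫ = 1
        · obtain ⟨v, hv⟩ := h
          exact ⟨v, fun _ => hv⟩
        · exact ⟨0, fun h' => absurd h' h⟩
      choose v hv using hv
      set U : ℝ := 1 + ∑ q ∈ R.powerset ×ˢ R, ‖v q‖ with hU
      have hUpos : 0 < U := by positivity
      have hUle : ∀ q ∈ R.powerset ×ˢ R, ‖v q‖ ≤ U := fun q hq =>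
        (Finset.single_le_sum (f := fun q => ‖v q‖) (fun _ _ => norm_nonneg _) hq).trans
          (by linarith)
      refine ⟨min c' (ε * c' / (2 * U)), lt_min hc' (by positivity),
        (min_le_left _ _).trans hc'1, fun δ hδ x hx => ?_⟩
      set c := min c' (ε * c' / (2 * U)) with hc
      have hcpos : 0 < c := lt_min hc' (by positivity)
      have hc1 : c ≤ 1 := (min_le_left _ _).trans hc'1
      by_cases hall : ∀ β ∈ R, ⟪β, x⟫ = 0 ∨ c * δ ≤ |⟪β, x⟫|
      · refine ⟨x, c * δ, le_rfl, mul_le_of_le_one_left hδ.le hc1, ?_, hall⟩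
        rw [sub_self, norm_zero]
        positivity
      · push Not at hall
        obtain ⟨β, hβ, hβ0, hβc⟩ := hall
        set Z := R.filter fun α => ⟪α, x⟫ = 0 with hZ
        obtain ⟨hvZ, hvβ⟩ := hv (Z, β) ⟨⟪β, x⟫⁻¹ • x, fun α hα => by
          rw [inner_smul_right, (Finset.mem_filter.1 hα).2, mul_zero], by
          rw [inner_smul_right, inv_mul_cancel₀ hβ0]⟩
        simp only at hvZ hvβ
        set x' := x - ⟪β, x⟫ • v (Z, β) with hx'
        have hlt : (R.filter fun α => ⟪α, x'⟫ ≠ 0).card < (R.filter fun α => ⟪α, x⟫ ≠ 0).card := by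
          refine Finset.card_lt_card (Finset.ssubset_iff_of_subset ?_ |>.2 ⟨β, ?_, ?_⟩)
          · intro α hα
            rw [Finset.mem_filter] at hα ⊢
            refine ⟨hα.1, fun h0 => hα.2 ?_⟩
            rw [hx', inner_sub_right, inner_smul_right, h0,
              hvZ α (Finset.mem_filter.2 ⟨hα.1, h0⟩)]
            simp
          · exact Finset.mem_filter.2 ⟨hβ, hβ0⟩
          · rw [Finset.mem_filter]
            rintro ⟨_, h0⟩
            refine h0 ?_
            rw [hx', inner_sub_right, inner_smul_right, hvβ]
            simp
        obtain ⟨p, d, hd, hdδ, hp, hR⟩ := h' δ hδ x' (by omega)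
        refine ⟨p, d, le_trans ?_ hd, hdδ, ?_, hR⟩
        · gcongr
          exact min_le_left _ _
        · have h1 : ‖x - x'‖ ≤ ε / 2 * d := by
            rw [hx', sub_sub_cancel, norm_smul, Real.norm_eq_abs]
            calc |⟪β, x⟫| * ‖v (Z, β)‖ ≤ (ε * c' / (2 * U) * δ) * U := by
                  gcongr
                  · exact hβc.le.trans (mul_le_mul_of_nonneg_right (min_le_right _ _) hδ.le)
                  · exact hUle _ (Finset.mem_product.2
                      ⟨Finset.mem_powerset.2 (Finset.filter_subset _ _), hβ⟩)
              _ = ε / 2 * (c' * δ) := by field_simp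
              _ ≤ _ := by gcongr
          calc ‖x - p‖ ≤ ‖x - x'‖ + ‖x' - p‖ := norm_sub_le_norm_sub_add_norm_sub _ _ _
            _ ≤ ε / 2 * d + ε / 2 * d := add_le_add h1 hp
            _ = ε * d := by ring
  obtain ⟨c, hc, _, h⟩ := key R.card ε hε
  exact ⟨c, hc, fun δ hδ x => h δ hδ x (Finset.card_filter_le _ _)⟩

theorem rRefl_eq_reflection (α x : E) : rRefl α x = (ℝ ∙ α)ᗮ.reflection x := by
  rw [Submodule.reflection_orthogonal_apply, Submodule.reflection_singleton_apply, rRefl, coroot,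
    inner_smul_left, real_inner_self_eq_norm_sq]
  simp only [RCLike.ofReal_real_eq_id, id_eq, neg_sub, two_smul, ← add_smul]
  congr 2
  simp
  ring

/-- The reflection in the root `α`, as an element of the Weyl group. -/
def weylReflection (D : HOData E) (α : E) : weylGroup D :=
  if h : α ∈ D.R then
    ⟨(ℝ ∙ α)ᗮ.reflection, Subgroup.subset_closure ⟨α, h, fun x => (rRefl_eq_reflection α x).symm⟩⟩
  else 1

theorem weylReflection_apply {D : HOData E} {α : E} (hα : α ∈ D.R) (x : E) :
    (weylReflection D α).1 x = rRefl α x := by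
  rw [weylReflection, dif_pos hα, rRefl_eq_reflection]

theorem weylReflection_mul_apply {D : HOData E} {α : E} (hα : α ∈ D.R) (w : weylGroup D) (x : E) :
    (weylReflection D α * w).1 x = rRefl α (w.1 x) :=
  weylReflection_apply hα _

theorem inner_rRefl {α : E} (hα : α ≠ 0) (x : E) : ⟪α, rRefl α x⟫ = -⟪α, x⟫ := by
  have : ⟪α, α⟫ ≠ 0 := by simpa using hα
  rw [rRefl, coroot, inner_sub_right, inner_smul_right, inner_smul_left]
  simp only [RCLike.conj_to_real]
  field_simp
  ring

theorem weylGroup_apply_mem {D : HOData E} (w : weylGroup D) : ∀ α ∈ D.R, w.1 α ∈ D.R := by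
  obtain ⟨w, hw⟩ := w
  refine Subgroup.closure_induction (p := fun w _ => ∀ α ∈ D.R, w α ∈ D.R) ?_ ?_ ?_ ?_ hw
  · rintro w ⟨β, hβ, hwβ⟩ α hα
    rw [hwβ]
    exact D.refl_mem β hβ α hα
  · intro α hα
    exact hα
  · intro v w _ _ hv hw α hα
    exact hv _ (hw _ hα)
  · intro w _ hw α hα
    have hinj : Set.InjOn w D.R := w.injective.injOn
    have himg : D.R.image w = D.R :=
      Finset.eq_of_subset_of_card_le (Finset.image_subset_iff.2 hw)
        (Finset.card_image_of_injOn hinj).ge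
    rw [← himg, Finset.mem_image] at hα
    obtain ⟨β, hβ, rfl⟩ := hα
    have : w⁻¹ (w β) = β := w.symm_apply_apply β
    rwa [this]

theorem inner_weylGroup_apply {D : HOData E} (w : weylGroup D) (x y : E) :
    ⟪x, w.1 y⟫ = ⟪(w⁻¹).1 x, y⟫ := by
  have : w.1 ((w⁻¹).1 x) = x := w.1.apply_symm_apply x
  conv_lhs => rw [← this]
  exact w.1.inner_map_map _ _

/-- Near a given point, moving along a generic direction gives regular points. -/
theorem eventually_regular (D : HOData E) (x : E) :
    ∃ u : E, ∀ᶠ s : ℝ in nhdsWithin 0 {0}ᶜ, HORegular D (x + s • u) := by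
  obtain ⟨u, hu⟩ := D.pos_char
  refine ⟨u, ?_⟩
  have hu0 : ∀ α ∈ D.R, ⟪α, u⟫ ≠ 0 := by
    intro α hα h0
    rcases D.pos_or_neg α hα with h | h
    · exact absurd ((hu α hα).1 h) (by simp [h0])
    · exact absurd ((hu _ (D.neg_mem α hα)).1 h) (by simp [h0])
  refine (Filter.eventually_all_finset D.R).2 fun α hα => ?_
  by_cases hx : ⟪α, x⟫ = 0
  · filter_upwards [self_mem_nhdsWithin] with s hs
    rw [inner_add_right, inner_smul_right, hx, zero_add]
    exact mul_ne_zero hs (hu0 α hα)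
  · have hc : ContinuousAt (fun s : ℝ => ⟪α, x + s • u⟫) 0 := by fun_prop
    exact (hc.eventually_ne (by simpa using hx)).filter_mono nhdsWithin_le_nhds

theorem tendsto_add_smul_nhdsNE (x u : E) :
    Filter.Tendsto (fun s : ℝ => x + s • u) (nhdsWithin 0 {0}ᶜ) (nhds x) := by
  have : Continuous fun s : ℝ => x + s • u := by fun_prop
  simpa using (this.tendsto 0).mono_left nhdsWithin_le_nhds

/-- The Cherednik equation extends to singular points, in directions tangent to the reflection
hyperplanes containing the point. -/
theorem fderiv_eq_of_regular {F : Type*} [NormedAddCommGroup F] [NormedSpace ℝ F] (D : HOData E)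
    {G : E → F} (hG : ContDiff ℝ 1 G) {m : F → F} (hm : Continuous m) {ξ : E}
    (h : ∀ x, HORegular D x → fderiv ℝ G x ξ =
      (∑ α ∈ D.Rpos, (D.k α * ⟪α, ξ⟫ / (1 - Real.exp (-⟪α, x⟫))) • (G (rRefl α x) - G x)) +
        m (G x))
    {x : E} (hx : ∀ α ∈ D.R, ⟪α, x⟫ = 0 → ⟪α, ξ⟫ = 0) :
    fderiv ℝ G x ξ =
      (∑ α ∈ D.Rpos, (D.k α * ⟪α, ξ⟫ / (1 - Real.exp (-⟪α, x⟫))) • (G (rRefl α x) - G x)) +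
        m (G x) := by
  obtain ⟨u, hu⟩ := eventually_regular D x
  have hlim := tendsto_add_smul_nhdsNE x u
  have h1 : Filter.Tendsto (fun s : ℝ => fderiv ℝ G (x + s • u) ξ) (nhdsWithin 0 {0}ᶜ)
      (nhds (fderiv ℝ G x ξ)) := by
    have : Continuous fun y => fderiv ℝ G y ξ :=
      (hG.continuous_fderiv (by simp)).clm_apply continuous_const
    exact (this.tendsto x).comp hlim
  refine tendsto_nhds_unique (h1.congr' (hu.mono fun s hs => h _ hs)) ?_
  refine Filter.Tendsto.add (tendsto_finsetSum _ fun α hα => ?_)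
    (((hm.comp hG.continuous).tendsto x).comp hlim)
  have hαR := D.pos_subset hα
  by_cases hξ : ⟪α, ξ⟫ = 0
  · simp [hξ]
  · have hαx : ⟪α, x⟫ ≠ 0 := fun h0 => hξ (hx α hαR h0)
    have hne : 1 - Real.exp (-⟪α, x⟫) ≠ 0 := fun h0 => hαx (by
      have : Real.exp (-⟪α, x⟫) = 1 := by linarith
      simpa using this)
    have hc : ContinuousAt (fun y : E => (D.k α * ⟪α, ξ⟫ / (1 - Real.exp (-⟪α, y⟫))) •
        (G (rRefl α y) - G y)) x := by
      have h2 : Continuous fun y : E => G (rRefl α y) - G y := by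
        have := hG.continuous
        unfold rRefl
        fun_prop
      have h3 : ContinuousAt (fun y : E => 1 - Real.exp (-⟪α, y⟫)) x := by fun_prop
      exact (continuousAt_const.div h3 hne).smul h2.continuousAt
    exact hc.tendsto.comp hlim

theorem AnalyticOnNhd.contDiff_univ {F : Type*} [NormedAddCommGroup F] [NormedSpace ℝ F]
    [CompleteSpace F] {G : E → F} (hG : AnalyticOnNhd ℝ G Set.univ) {n : WithTop ℕ∞} :
    ContDiff ℝ n G :=
  contDiffOn_univ.1 (hG.contDiffOn uniqueDiffOn_univ)

/-- The Cherednik system along a line, seen on the whole Weyl group orbit. -/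
theorem hasDerivAt_weyl_line {F : Type*} [NormedAddCommGroup F] [NormedSpace ℝ F]
    (D : HOData E) {G : E → F} (hG : ContDiff ℝ 1 G) {m : E → F → F} (hm : ∀ ξ, Continuous (m ξ))
    (h : ∀ ξ x, HORegular D x → fderiv ℝ G x ξ =
      (∑ α ∈ D.Rpos, (D.k α * ⟪α, ξ⟫ / (1 - Real.exp (-⟪α, x⟫))) • (G (rRefl α x) - G x)) +
        m ξ (G x))
    (p y : E) (w : weylGroup D) (t : ℝ)
    (ht : ∀ α ∈ D.R, ⟪α, w.1 p⟫ + t * ⟪α, w.1 y⟫ = 0 → ⟪α, w.1 y⟫ = 0) :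
    HasDerivAt (fun t : ℝ => G (w.1 (p + t • y)))
      ((∑ α ∈ D.Rpos, (D.k α * ⟪α, w.1 y⟫ /
          (1 - Real.exp (-(⟪α, w.1 p⟫ + t * ⟪α, w.1 y⟫)))) •
          (G ((weylReflection D α * w).1 (p + t • y)) - G (w.1 (p + t • y)))) +
        m (w.1 y) (G (w.1 (p + t • y)))) t := by
  have hin : ∀ α, ⟪α, w.1 (p + t • y)⟫ = ⟪α, w.1 p⟫ + t * ⟪α, w.1 y⟫ := fun α => by
    rw [map_add, map_smul, inner_add_right, inner_smul_right]
  have h1 := fderiv_eq_of_regular D hG (hm (w.1 y)) (h (w.1 y)) (x := w.1 (p + t • y))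
    fun α hα h0 => ht α hα (by rwa [hin] at h0)
  have h2 : HasDerivAt (fun t : ℝ => w.1 (p + t • y)) (w.1 y) t := by
    have h3 : HasDerivAt (fun t : ℝ => p + t • y) y t := by
      simpa using ((hasDerivAt_id t).smul_const y).const_add p
    exact w.1.toContinuousLinearEquiv.toContinuousLinearMap.hasFDerivAt.comp_hasDerivAt t h3
  have h4 := ((hG.differentiable (by simp) (w.1 (p + t • y))).hasFDerivAt).comp_hasDerivAt t h2
  refine h4.congr_deriv (h1.trans ?_)
  congr 1
  refine Finset.sum_congr rfl fun α hα => ?_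
  rw [hin, weylReflection_mul_apply (D.pos_subset hα)]

/-- The multiplier `(ρ + λ, ξ)` of the Cherednik system for `λ = l1 + i l2`. -/
def spectralForm (D : HOData E) (l1 l2 ξ : E) : ℂ :=
  ((⟪rhoHO D + l1, ξ⟫ : ℝ) : ℂ) + Complex.I * ((⟪l2, ξ⟫ : ℝ) : ℂ)

theorem spectralForm_re (D : HOData E) (l1 l2 ξ : E) :
    (spectralForm D l1 l2 ξ).re = ⟪rhoHO D + l1, ξ⟫ := by
  simp [spectralForm]

theorem norm_spectralForm_le (D : HOData E) (l1 l2 ξ : E) :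
    ‖spectralForm D l1 l2 ξ‖ ≤ (‖rhoHO D‖ + ‖l1‖ + ‖l2‖) * ‖ξ‖ := by
  rw [spectralForm]
  refine (norm_add_le _ _).trans ?_
  rw [norm_mul, Complex.norm_I, one_mul, Complex.norm_real, Complex.norm_real]
  calc _ ≤ ‖rhoHO D + l1‖ * ‖ξ‖ + ‖l2‖ * ‖ξ‖ :=
        add_le_add (abs_real_inner_le_norm _ _) (abs_real_inner_le_norm _ _)
    _ ≤ (‖rhoHO D‖ + ‖l1‖) * ‖ξ‖ + ‖l2‖ * ‖ξ‖ := by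
        gcongr
        exact norm_add_le _ _
    _ = _ := by ring

theorem IsOpdamC.fderiv_eq {D : HOData E} {l1 l2 : E} {G : E → ℂ} (hG : IsOpdamC D l1 l2 G)
    (ξ x : E) (hx : HORegular D x) : fderiv ℝ G x ξ =
      (∑ α ∈ D.Rpos, (D.k α * ⟪α, ξ⟫ / (1 - Real.exp (-⟪α, x⟫))) • (G (rRefl α x) - G x)) +
        spectralForm D l1 l2 ξ * G x := by
  simp only [Complex.real_smul]
  exact hG.2.2 ξ x hx

theorem IsOpdamR.fderiv_eq {D : HOData E} {l : E} {G : E → ℝ} (hG : IsOpdamR D l G)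
    (ξ x : E) (hx : HORegular D x) : fderiv ℝ G x ξ =
      (∑ α ∈ D.Rpos, (D.k α * ⟪α, ξ⟫ / (1 - Real.exp (-⟪α, x⟫))) • (G (rRefl α x) - G x)) +
        ⟪rhoHO D + l, ξ⟫ * G x :=
  hG.2.2 ξ x hx

theorem IsOpdamR.ofReal {D : HOData E} {G : E → ℝ} (hG : IsOpdamR D 0 G) :
    IsOpdamC D 0 0 (fun x => (G x : ℂ)) := by
  refine ⟨fun x hx => (Complex.ofRealCLM.analyticAt _).comp (hG.1 x hx), by simp [hG.2.1],
    fun ξ x hx => ?_⟩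
  have h1 : fderiv ℝ (fun x => (G x : ℂ)) x ξ = (fderiv ℝ G x ξ : ℂ) := by
    have := Complex.ofRealCLM.hasFDerivAt.comp x (hG.1 x (Set.mem_univ x)).differentiableAt.hasFDerivAt
    have h2 : HasFDerivAt (fun x => (G x : ℂ)) _ x := this
    rw [h2.fderiv]
    rfl
  rw [h1, hG.2.2 ξ x hx]
  push_cast
  simp

theorem inner_weyl_le_maxW (D : HOData E) [Fintype (weylGroup D)] (w : weylGroup D) (l x : E) :
    ⟪l, w.1 x⟫ ≤ maxW D l x := by
  rw [inner_weylGroup_apply]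
  exact le_ciSup (f := fun w : weylGroup D => ⟪w.1 l, x⟫) (Set.finite_range _).bddAbove w⁻¹

theorem maxW_weyl_apply (D : HOData E) [Fintype (weylGroup D)] (w : weylGroup D) (l x : E) :
    maxW D l (w.1 x) = maxW D l x := by
  have h : ∀ v : weylGroup D, ⟪v.1 l, w.1 x⟫ = ⟪((Equiv.mulLeft w⁻¹) v).1 l, x⟫ := fun v =>
    inner_weylGroup_apply w _ _
  rw [maxW, maxW, iSup_congr h]
  exact Equiv.iSup_comp (g := fun v : weylGroup D => ⟪v.1 l, x⟫) (Equiv.mulLeft w⁻¹)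

theorem maxW_le_add (D : HOData E) [Fintype (weylGroup D)] (l x p : E) :
    maxW D l p ≤ maxW D l x + ‖l‖ * ‖x - p‖ := by
  refine ciSup_le fun w => ?_
  have h1 : ⟪w.1 l, x⟫ ≤ maxW D l x :=
    le_ciSup (f := fun w : weylGroup D => ⟪w.1 l, x⟫) (Set.finite_range _).bddAbove w
  have h2 : ⟪w.1 l, p - x⟫ ≤ ‖l‖ * ‖x - p‖ := by
    refine (real_inner_le_norm _ _).trans_eq ?_
    rw [w.1.norm_map, norm_sub_rev]
  rw [inner_sub_right] at h2
  linarith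

theorem div_one_sub_exp_neg_nonneg {s t : ℝ} (ht : 0 < t) :
    0 ≤ s / (1 - Real.exp (-(t * s))) := by
  rcases le_total 0 s with hs | hs
  · refine div_nonneg hs ?_
    have : Real.exp (-(t * s)) ≤ 1 := Real.exp_le_one_iff.2 (by nlinarith)
    linarith
  · refine div_nonneg_of_nonpos hs ?_
    have : 1 ≤ Real.exp (-(t * s)) := Real.one_le_exp (by nlinarith)
    linarith

/-- The sharp pointwise estimate `|G_λ(x)| ≤ G_0(x) e^{max_w (w Re λ, x)}`. -/
theorem IsOpdamC.norm_le {D : HOData E} [Fintype (weylGroup D)] {l1 l2 : E} {G : E → ℂ}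
    (hG : IsOpdamC D l1 l2 G) {G₀ : E → ℝ} (hG₀ : IsOpdamR D 0 G₀) (x : E) :
    ‖G x‖ ≤ G₀ x * Real.exp (maxW D l1 x) := by
  set m := maxW D l1 x with hm
  have hGd : ContDiff ℝ 1 G := hG.1.contDiff_univ
  have hGd₀ : ContDiff ℝ 1 G₀ := hG₀.1.contDiff_univ
  have hreg : ∀ w : weylGroup D, ∀ t : ℝ, 0 < t → ∀ α ∈ D.R,
      ⟪α, w.1 0⟫ + t * ⟪α, w.1 x⟫ = 0 → ⟪α, w.1 x⟫ = 0 := by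
    intro w t ht α _ h0
    rw [map_zero, inner_zero_right, zero_add] at h0
    exact (mul_eq_zero.1 h0).resolve_left ht.ne'
  have key := norm_le_of_cooperative_system (ι := weylGroup D) D.Rpos
    (fun α w => weylReflection D α * w)
    (fun α w t => D.k α * (⟪α, w.1 x⟫ / (1 - Real.exp (-(t * ⟪α, w.1 x⟫)))))
    (fun α hα w t ht _ => mul_nonneg (D.k_pos α (D.pos_subset hα)).le
      (div_one_sub_exp_neg_nonneg ht))
    (fun w t => G (w.1 (0 + t • x))) (fun w t => G₀ (w.1 (0 + t • x)) * Real.exp (m * t))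
    (fun w => spectralForm D l1 l2 (w.1 x)) (fun w => ⟪rhoHO D, w.1 x⟫ + m)
    (fun w => by
      rw [spectralForm_re, inner_add_left]
      exact add_le_add le_rfl (inner_weyl_le_maxW D w l1 x))
    (fun w => by
      have := hGd.continuous
      have := w.1.continuous
      fun_prop)
    (fun w => by
      have := hGd₀.continuous
      have := w.1.continuous
      fun_prop)
    (fun w t ht _ => by
      refine (hasDerivAt_weyl_line D hGd (m := fun ξ z => spectralForm D l1 l2 ξ * z)
        (fun ξ => by fun_prop) hG.fderiv_eq 0 x w t (hreg w t ht)).congr_deriv ?_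
      simp only [Complex.real_smul, map_zero, inner_zero_right, zero_add, mul_div_assoc])
    (fun w t ht _ => by
      have h1 := hasDerivAt_weyl_line D hGd₀ (m := fun ξ z => ⟪rhoHO D + 0, ξ⟫ * z)
        (fun ξ => by fun_prop) hG₀.fderiv_eq 0 x w t (hreg w t ht)
      have h2 : HasDerivAt (fun t : ℝ => Real.exp (m * t)) (Real.exp (m * t) * m) t :=
        (hasDerivAt_const_mul m).exp
      refine (h1.fun_mul h2).congr_deriv ?_
      simp only [smul_eq_mul, map_zero, inner_zero_right, zero_add, add_zero, mul_div_assoc,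
        add_mul, Finset.sum_mul, sub_mul, mul_sub]
      rw [add_assoc]
      congr 1
      · refine Finset.sum_congr rfl fun α _ => ?_
        ring
      · ring)
    (fun w => by simp [hG.2.1, hG₀.2.1]) 1
  simpa using key

theorem IsOpdamR.nonneg {D : HOData E} [Fintype (weylGroup D)] {G : E → ℝ}
    (hG : IsOpdamR D 0 G) (x : E) : 0 ≤ G x := by
  have h := (norm_nonneg _).trans (hG.ofReal.norm_le hG x)
  exact nonneg_of_mul_nonneg_left h (Real.exp_pos _)

theorem le_card_mul_Fsym {D : HOData E} [Fintype (weylGroup D)] {G : E → ℝ}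
    (hG : ∀ x, 0 ≤ G x) (w : weylGroup D) (x : E) :
    G (w.1 x) ≤ Fintype.card (weylGroup D) * Fsym D G x := by
  have hc : (Fintype.card (weylGroup D) : ℝ) ≠ 0 := by exact_mod_cast Fintype.card_ne_zero
  rw [Fsym, mul_inv_cancel_left₀ hc]
  exact Finset.single_le_sum (f := fun w : weylGroup D => G (w.1 x)) (fun v _ => hG _)
    (Finset.mem_univ w)

/-- The derivative of the symmetrization `F_0`. -/
theorem fderiv_sum_weyl {D : HOData E} [Fintype (weylGroup D)] {G : E → ℝ}
    (hG : IsOpdamR D 0 G) (ξ x : E) :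
    fderiv ℝ (fun x => ∑ w : weylGroup D, G (w.1 x)) x ξ =
      -∑ w : weylGroup D, ⟪rhoHO D, w.1 ξ⟫ * G (w.1 x) := by
  have hGd : ContDiff ℝ 1 G := hG.1.contDiff_univ
  have hwc : ∀ w : weylGroup D, ContDiff ℝ 1 fun x => G (w.1 x) := fun w =>
    hGd.comp w.1.toContinuousLinearEquiv.contDiff
  have hS : ContDiff ℝ 1 fun x => ∑ w : weylGroup D, G (w.1 x) := ContDiff.sum fun w _ => hwc w
  have hregular : ∀ x, HORegular D x →
      fderiv ℝ (fun x => ∑ w : weylGroup D, G (w.1 x)) x ξ =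
      -∑ w : weylGroup D, ⟪rhoHO D, w.1 ξ⟫ * G (w.1 x) := by
    intro x hx
    have hwx : ∀ w : weylGroup D, ∀ α ∈ D.R, ⟪α, w.1 x⟫ ≠ 0 := fun w α hα => by
      rw [inner_weylGroup_apply]
      exact hx _ (weylGroup_apply_mem w⁻¹ α hα)
    have h1 : ∀ w : weylGroup D, fderiv ℝ (fun x => G (w.1 x)) x ξ = fderiv ℝ G (w.1 x) (w.1 ξ) := by
      intro w
      have := ((hGd.differentiable (by simp) (w.1 x)).hasFDerivAt).comp x
        w.1.toContinuousLinearEquiv.toContinuousLinearMap.hasFDerivAt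
      have h2 : HasFDerivAt (fun x => G (w.1 x)) _ x := this
      rw [h2.fderiv]
      rfl
    rw [fderiv_fun_sum fun w _ => (hwc w).differentiable (by simp) x]
    simp only [sum_apply, h1]
    simp only [fun w : weylGroup D => hG.2.2 (w.1 ξ) (w.1 x) (hwx w), add_zero]
    rw [Finset.sum_add_distrib, Finset.sum_comm]
    have h3 : ∀ α ∈ D.Rpos, ∑ w : weylGroup D, D.k α * ⟪α, w.1 ξ⟫ /
        (1 - Real.exp (-⟪α, w.1 x⟫)) * (G (rRefl α (w.1 x)) - G (w.1 x)) =
        -∑ w : weylGroup D, D.k α * ⟪α, w.1 ξ⟫ * G (w.1 x) := by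
      intro α hα
      have hαR := D.pos_subset hα
      have h4 : ∑ w : weylGroup D, D.k α * ⟪α, w.1 ξ⟫ /
          (1 - Real.exp (-⟪α, w.1 x⟫)) * G (rRefl α (w.1 x)) =
          ∑ w : weylGroup D, D.k α * (-⟪α, w.1 ξ⟫) /
          (1 - Real.exp (⟪α, w.1 x⟫)) * G (w.1 x) := by
        rw [← Equiv.sum_comp (Equiv.mulLeft (weylReflection D α)) fun w : weylGroup D =>
          D.k α * (-⟪α, w.1 ξ⟫) / (1 - Real.exp (⟪α, w.1 x⟫)) * G (w.1 x)]
        refine Finset.sum_congr rfl fun w _ => ?_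
        simp only [Equiv.coe_mulLeft, weylReflection_mul_apply hαR,
          inner_rRefl (D.root_ne_zero α hαR), neg_neg]
      simp only [mul_sub, Finset.sum_sub_distrib]
      rw [h4, ← Finset.sum_sub_distrib, ← Finset.sum_neg_distrib]
      refine Finset.sum_congr rfl fun w _ => ?_
      have hne : Real.exp ⟪α, w.1 x⟫ ≠ 1 := by simpa using hwx w α hαR
      have h5 : 1 - Real.exp ⟪α, w.1 x⟫ ≠ 0 := sub_ne_zero.2 hne.symm
      have h6 : Real.exp ⟪α, w.1 x⟫ - 1 ≠ 0 := sub_ne_zero.2 hne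
      rw [Real.exp_neg]
      have h7 := Real.exp_pos ⟪α, w.1 x⟫
      have h8 : 1 - (Real.exp ⟪α, w.1 x⟫)⁻¹ =
          -(1 - Real.exp ⟪α, w.1 x⟫) / Real.exp ⟪α, w.1 x⟫ := by field_simp; ring
      rw [h8]
      field_simp
      ring
    rw [Finset.sum_congr rfl h3, Finset.sum_neg_distrib, Finset.sum_comm,
      ← Finset.sum_neg_distrib, ← Finset.sum_add_distrib, ← Finset.sum_neg_distrib]
    refine Finset.sum_congr rfl fun w _ => ?_
    rw [← Finset.sum_mul]
    have h9 : ∑ α ∈ D.Rpos, D.k α * ⟪α, w.1 ξ⟫ = 2 * ⟪rhoHO D, w.1 ξ⟫ := by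
      rw [rhoHO, inner_smul_left, sum_inner]
      simp [inner_smul_left]
    rw [h9]
    ring
  obtain ⟨u, hu⟩ := eventually_regular D x
  have hlim := tendsto_add_smul_nhdsNE x u
  have hc1 : Continuous fun y => fderiv ℝ (fun x => ∑ w : weylGroup D, G (w.1 x)) y ξ :=
    (hS.continuous_fderiv (by simp)).clm_apply continuous_const
  have hc2 : Continuous fun y => -∑ w : weylGroup D, ⟪rhoHO D, w.1 ξ⟫ * G (w.1 y) :=
    (continuous_finsetSum _ fun w _ => continuous_const.mul (hwc w).continuous).neg
  exact tendsto_nhds_unique (((hc1.tendsto x).comp hlim).congr' (hu.mono fun s hs => hregular _ hs))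
    ((hc2.tendsto x).comp hlim)

/-- Harnack inequality for `F_0`. -/
theorem Fsym_le_exp_mul {D : HOData E} [Fintype (weylGroup D)] {G : E → ℝ}
    (hG : IsOpdamR D 0 G) (x p : E) :
    Fsym D G p ≤ Real.exp (‖rhoHO D‖ * ‖x - p‖) * Fsym D G x := by
  set S : E → ℝ := fun x => ∑ w : weylGroup D, G (w.1 x) with hSdef
  have hGd : ContDiff ℝ 1 G := hG.1.contDiff_univ
  have hS : ContDiff ℝ 1 S := ContDiff.sum fun w _ =>
    hGd.comp w.1.toContinuousLinearEquiv.contDiff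
  have hder : ∀ ξ y, fderiv ℝ S y ξ ≤ ‖rhoHO D‖ * ‖ξ‖ * S y := by
    intro ξ y
    rw [hSdef, fderiv_sum_weyl hG, Finset.mul_sum, ← Finset.sum_neg_distrib]
    refine Finset.sum_le_sum fun w _ => ?_
    rw [← neg_mul]
    refine mul_le_mul_of_nonneg_right ?_ (hG.nonneg _)
    have := abs_real_inner_le_norm (rhoHO D) (w.1 ξ)
    rw [w.1.norm_map] at this
    exact (neg_le_abs _).trans this
  set C := ‖rhoHO D‖ * ‖x - p‖ with hC
  have hline : ∀ t : ℝ, HasDerivAt (fun t : ℝ => S (x + t • (p - x)) * Real.exp (-C * t))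
      (fderiv ℝ S (x + t • (p - x)) (p - x) * Real.exp (-C * t) +
        S (x + t • (p - x)) * (Real.exp (-C * t) * (-C))) t := by
    intro t
    have h3 : HasDerivAt (fun t : ℝ => x + t • (p - x)) (p - x) t := by
      simpa using ((hasDerivAt_id t).smul_const (p - x)).const_add x
    have h4 := ((hS.differentiable (by simp) (x + t • (p - x))).hasFDerivAt).comp_hasDerivAt t h3
    exact h4.fun_mul (hasDerivAt_const_mul (-C)).exp
  have hanti : Antitone fun t : ℝ => S (x + t • (p - x)) * Real.exp (-C * t) := by
    refine antitone_of_deriv_nonpos (fun t => (hline t).differentiableAt) fun t => ?_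
    rw [(hline t).deriv]
    have h5 := hder (p - x) (x + t • (p - x))
    rw [norm_sub_rev, ← hC] at h5
    nlinarith [Real.exp_pos (-C * t)]
  have h6 := hanti zero_le_one
  simp only [one_smul, add_sub_cancel, mul_one, zero_smul, add_zero, mul_zero, Real.exp_zero] at h6
  rw [Real.exp_neg, ← div_eq_mul_inv, div_le_iff₀ (Real.exp_pos _)] at h6
  have hc : (0 : ℝ) ≤ (Fintype.card (weylGroup D) : ℝ)⁻¹ := by positivity
  calc Fsym D G p = (Fintype.card (weylGroup D) : ℝ)⁻¹ * S p := rfl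
    _ ≤ (Fintype.card (weylGroup D) : ℝ)⁻¹ * (S x * Real.exp C) := by gcongr
    _ = Real.exp C * ((Fintype.card (weylGroup D) : ℝ)⁻¹ * S x) := by ring

/-- Cauchy-type bound for the pure directional derivatives of `G_λ` at a point whose distance to
every root hyperplane not containing it is bounded below. -/
theorem IsOpdamC.norm_iteratedFDeriv_diagonal_le {D : HOData E} [Fintype (weylGroup D)]
    {l1 l2 : E} {G : E → ℂ} (hG : IsOpdamC D l1 l2 G) {b₀ : ℝ} (hb₀ : 0 ≤ b₀)
    (hb : ∀ α ∈ D.R, ‖α‖ ≤ b₀) {p : E} {d M₀ : ℝ} (hd : 0 < d)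
    (hp : ∀ β ∈ D.R, ⟪β, p⟫ = 0 ∨ d ≤ |⟪β, p⟫|) (hM₀ : ∀ w : weylGroup D, ‖G (w.1 p)‖ ≤ M₀)
    {y : E} (hy : ‖y‖ ≤ 1) (n : ℕ) :
    ‖iteratedFDeriv ℝ n G p (fun _ => y)‖ ≤ n.factorial *
      ((b₀ * (2 + 1 / d) + 2 * (∑ α ∈ D.Rpos, D.k α) * (b₀ * (1 + 1 / d)) +
        (‖rhoHO D‖ + ‖l1‖ + ‖l2‖)) ^ n * M₀) := by
  have hwp : ∀ (w : weylGroup D), ∀ α ∈ D.R, ⟪α, w.1 p⟫ = 0 ∨ d ≤ |⟪α, w.1 p⟫| := by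
    intro w α hα
    rw [inner_weylGroup_apply]
    exact hp _ (weylGroup_apply_mem w⁻¹ α hα)
  have hwy : ∀ (w : weylGroup D), ∀ α ∈ D.R, |⟪α, w.1 y⟫| ≤ b₀ := by
    intro w α hα
    refine (abs_real_inner_le_norm _ _).trans ?_
    rw [w.1.norm_map]
    exact (mul_le_of_le_one_right (norm_nonneg _) hy).trans (hb α hα)
  have hcoup : ∀ (α : E) (w : weylGroup D), ∃ e : ℝ → ℂ, α ∈ D.Rpos →
      AnalyticAt ℝ e 0 ∧
      (∀ᶠ t in nhdsWithin (0 : ℝ) {0}ᶜ, e t =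
        ((t * ⟪α, w.1 y⟫ / (1 - Real.exp (-(⟪α, w.1 p⟫ + t * ⟪α, w.1 y⟫))) : ℝ) : ℂ)) ∧
      (∃ z : ℝ, 0 ≤ z ∧ taylorCoeff e 0 = z) ∧
      ∀ m, ‖taylorCoeff e (m + 1)‖ ≤ b₀ * (1 + 1 / d) * (b₀ * (2 + 1 / d)) ^ m := by
    intro α w
    by_cases hα : α ∈ D.Rpos
    · obtain ⟨e, he⟩ := exists_coupling hd (hwp w α (D.pos_subset hα)) (hwy w α (D.pos_subset hα))
      exact ⟨e, fun _ => he⟩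
    · exact ⟨0, fun h => absurd h hα⟩
  choose e he using hcoup
  have hGd : ContDiff ℝ 1 G := hG.1.contDiff_univ
  have hreg : ∀ w : weylGroup D, ∀ᶠ t in nhdsWithin (0 : ℝ) {0}ᶜ, ∀ α ∈ D.R,
      ⟪α, w.1 p⟫ + t * ⟪α, w.1 y⟫ = 0 → ⟪α, w.1 y⟫ = 0 := by
    intro w
    rw [Filter.eventually_all_finset]
    intro α _
    by_cases h0 : ⟪α, w.1 p⟫ = 0
    · filter_upwards [self_mem_nhdsWithin] with t ht h
      rw [h0, zero_add] at h
      exact (mul_eq_zero.1 h).resolve_left ht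
    · have hc : Continuous fun t : ℝ => ⟪α, w.1 p⟫ + t * ⟪α, w.1 y⟫ := by fun_prop
      have := hc.continuousAt.eventually_ne (x := 0) (y := 0) (by simpa using h0)
      exact (this.filter_mono nhdsWithin_le_nhds).mono fun t ht h => absurd h ht
  have key := norm_taylorCoeff_le_of_fuchsian (ι := weylGroup D) D.Rpos
    (fun α w => weylReflection D α * w) (k := D.k)
    (fun α hα => (D.k_pos α (D.pos_subset hα)).le) (e := e)
    (H := b₀ * (1 + 1 / d)) (κ := b₀ * (2 + 1 / d)) (M := ‖rhoHO D‖ + ‖l1‖ + ‖l2‖) (M₀ := M₀)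
    (fun α hα w => (he α w hα).1) (by positivity) (by positivity)
    (fun α hα w => (he α w hα).2.2.1) (fun α hα w => (he α w hα).2.2.2)
    (φ := fun w t => G (w.1 (p + t • y)))
    (fun w => by
      have h1 : AnalyticAt ℝ (fun t : ℝ => w.1 (p + t • y)) 0 := by
        have h2 : AnalyticAt ℝ (fun t : ℝ => p + t • y) 0 := by fun_prop
        exact (w.1.toContinuousLinearEquiv.toContinuousLinearMap.analyticAt _).comp h2
      exact (hG.1 _ (Set.mem_univ _)).comp h1)
    (μ := fun w => spectralForm D l1 l2 (w.1 y))
    (fun w => by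
      refine (norm_spectralForm_le D l1 l2 _).trans ?_
      rw [w.1.norm_map]
      exact mul_le_of_le_one_right (by positivity) hy)
    (fun w => by
      have hall : ∀ᶠ t in nhdsWithin (0 : ℝ) {0}ᶜ, ∀ α ∈ D.Rpos, e α w t =
          ((t * ⟪α, w.1 y⟫ / (1 - Real.exp (-(⟪α, w.1 p⟫ + t * ⟪α, w.1 y⟫))) : ℝ) : ℂ) := by
        rw [Filter.eventually_all_finset]
        exact fun α hα => (he α w hα).2.1
      filter_upwards [hall, hreg w] with t ht hrt
      rw [(hasDerivAt_weyl_line D hGd (m := fun ξ z => spectralForm D l1 l2 ξ * z)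
        (fun ξ => by fun_prop) hG.fderiv_eq p y w t hrt).deriv, mul_add, Finset.mul_sum]
      congr 1
      refine Finset.sum_congr rfl fun α hα => ?_
      rw [ht α hα, Complex.real_smul]
      push_cast
      ring)
    (fun w => by simpa using hM₀ w) 1 n
  have h3 := iteratedDeriv_comp_line (hG.1.contDiff_univ) p y n 0
  rw [zero_smul, add_zero] at h3
  have h4 : taylorCoeff (fun t : ℝ => G ((1 : weylGroup D).1 (p + t • y))) n =
      iteratedFDeriv ℝ n G p (fun _ => y) / n.factorial := by
    rw [taylorCoeff, ← h3]
    rfl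
  rw [h4, norm_div, Complex.norm_natCast, div_le_iff₀ (by positivity), mul_comm] at key
  exact key

/-- for each `N`, uniformly in `λ ∈ h` and in unit directions `ξ₁,…,ξ_N`,
`|∂_{ξ₁} ⋯ ∂_{ξ_N} G_λ(x)| ≤ C (1+|λ|)^N F₀(x) e^{max_w (w Re λ, x)}`. -/
theorem statement15 (D : HOData E) [Fintype (weylGroup D)]
    (G : E → E → E → ℂ) (hG : ∀ l1 l2, IsOpdamC D l1 l2 (G l1 l2))
    (Gzero : E → ℝ) (hG0 : IsOpdamR D 0 Gzero) (N : ℕ) :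
    ∃ C : ℝ, 0 < C ∧ ∀ (l1 l2 x : E) (ξ : Fin N → E), (∀ i, ‖ξ i‖ = 1) →
      ‖iteratedFDeriv ℝ N (G l1 l2) x ξ‖ ≤
        C * (1 + Real.sqrt (‖l1‖ ^ 2 + ‖l2‖ ^ 2)) ^ N * Fsym D Gzero x *
          Real.exp (maxW D l1 x) := by
  set b₀ : ℝ := ∑ α ∈ D.R, ‖α‖ with hb₀def
  have hb₀ : 0 ≤ b₀ := Finset.sum_nonneg fun α _ => norm_nonneg α
  have hb : ∀ α ∈ D.R, ‖α‖ ≤ b₀ := fun α hα =>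
    Finset.single_le_sum (f := fun α : E => ‖α‖) (fun α _ => norm_nonneg α) hα
  set K : ℝ := ∑ α ∈ D.Rpos, D.k α with hKdef
  have hK : 0 ≤ K := Finset.sum_nonneg fun α hα => (D.k_pos α (D.pos_subset hα)).le
  set A : ℝ := 3 * b₀ + 4 * K * b₀ + ‖rhoHO D‖ + 2 with hAdef
  have hA : 0 < A := by positivity
  set ε : ℝ := 1 / (8 * Real.exp 1 * A) with hεdef
  have hε : 0 < ε := by positivity
  obtain ⟨c, hc, hadapt⟩ := exists_adapted_point D.R hε
  set q : ℝ := (Fintype.card (weylGroup D) : ℝ) with hq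
  have hq0 : 0 < q := by
    rw [hq]
    exact_mod_cast Fintype.card_pos
  refine ⟨N.factorial * (2 * ((4 * Real.exp 1 * A / c) ^ N * q *
    Real.exp (‖rhoHO D‖ * ε + ε))), by positivity, fun l1 l2 x ξ hξ => ?_⟩
  set Λ : ℝ := 1 + Real.sqrt (‖l1‖ ^ 2 + ‖l2‖ ^ 2) with hΛ
  have hΛ1 : 1 ≤ Λ := le_add_of_nonneg_right (Real.sqrt_nonneg _)
  have hΛ0 : 0 < Λ := one_pos.trans_le hΛ1
  have hl1 : ‖l1‖ ≤ Λ := by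
    have : ‖l1‖ ≤ Real.sqrt (‖l1‖ ^ 2 + ‖l2‖ ^ 2) := Real.le_sqrt_of_sq_le (by nlinarith [sq_nonneg ‖l2‖])
    linarith
  have hl2 : ‖l2‖ ≤ Λ := by
    have : ‖l2‖ ≤ Real.sqrt (‖l1‖ ^ 2 + ‖l2‖ ^ 2) := Real.le_sqrt_of_sq_le (by nlinarith [sq_nonneg ‖l1‖])
    linarith
  obtain ⟨p, d, hcd, hdΛ, hxp, hp⟩ := hadapt (1 / Λ) (by positivity) x
  have hd : 0 < d := lt_of_lt_of_le (by positivity) hcd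
  have hΛd : Λ ≤ 1 / d := by
    rw [le_div_iff₀ hd]
    rw [le_div_iff₀ hΛ0] at hdΛ
    linarith
  have hd1 : 1 ≤ 1 / d := hΛ1.trans hΛd
  set M₀ : ℝ := q * Fsym D Gzero p * Real.exp (maxW D l1 p) with hM₀def
  have hM₀ : ∀ w : weylGroup D, ‖G l1 l2 (w.1 p)‖ ≤ M₀ := by
    intro w
    refine ((hG l1 l2).norm_le hG0 _).trans ?_
    rw [maxW_weyl_apply, hM₀def]
    gcongr
    exact le_card_mul_Fsym hG0.nonneg w p
  have hM₀0 : 0 ≤ M₀ := (norm_nonneg _).trans (hM₀ 1)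
  have hAd : b₀ * (2 + 1 / d) + 2 * K * (b₀ * (1 + 1 / d)) + (‖rhoHO D‖ + ‖l1‖ + ‖l2‖) ≤ A / d := by
    have h1 : b₀ * (2 + 1 / d) ≤ b₀ * (3 * (1 / d)) := by gcongr; linarith
    have h2 : 2 * K * (b₀ * (1 + 1 / d)) ≤ 2 * K * (b₀ * (2 * (1 / d))) := by gcongr; linarith
    have h3 : ‖rhoHO D‖ ≤ ‖rhoHO D‖ * (1 / d) := le_mul_of_one_le_right (norm_nonneg _) hd1
    calc _ ≤ b₀ * (3 * (1 / d)) + 2 * K * (b₀ * (2 * (1 / d))) +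
          (‖rhoHO D‖ * (1 / d) + 1 / d + 1 / d) := by linarith
      _ = A / d := by rw [hAdef]; ring
  have hdiag : ∀ n, ∀ y : E, ‖y‖ ≤ 1 → ‖iteratedFDeriv ℝ n (G l1 l2) p (fun _ => y)‖ ≤
      n.factorial * ((A / d) ^ n * M₀) := by
    intro n y hy
    refine ((hG l1 l2).norm_iteratedFDeriv_diagonal_le hb₀ hb hd hp hM₀ hy n).trans ?_
    gcongr
  have hcauchy := fun n => norm_iteratedFDeriv_le_of_diagonal ((hG l1 l2).1 p (Set.mem_univ p))
    (n := n) (by positivity) hM₀0 (hdiag n)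
  have hxp' : ‖x - p‖ ≤ 1 / (4 * (2 * Real.exp 1 * (A / d))) := by
    refine hxp.trans_eq ?_
    rw [hεdef]
    field_simp
    ring
  have hmain := norm_iteratedFDeriv_le_of_taylor (hG l1 l2).1 (by positivity) hM₀0 hcauchy hxp' N ξ
    fun i => (hξ i).le
  rw [add_sub_cancel] at hmain
  have hF : Fsym D Gzero x = q⁻¹ * ∑ w : weylGroup D, Gzero (w.1 x) := rfl
  have hF0 : 0 ≤ Fsym D Gzero x := by
    rw [hF]
    exact mul_nonneg (by positivity) (Finset.sum_nonneg fun w _ => hG0.nonneg _)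
  have hdΛ' : d * Λ ≤ 1 := (le_div_iff₀ hΛ0).1 hdΛ
  have hxpε : ‖x - p‖ ≤ ε := hxp.trans (mul_le_of_le_one_right hε.le (by nlinarith))
  have hlε : ‖l1‖ * ‖x - p‖ ≤ ε := by
    calc ‖l1‖ * ‖x - p‖ ≤ Λ * (ε * d) := by gcongr
      _ = ε * (d * Λ) := by ring
      _ ≤ ε := mul_le_of_le_one_right hε.le hdΛ'
  have hM₀x : M₀ ≤ q * Real.exp (‖rhoHO D‖ * ε + ε) * (Fsym D Gzero x * Real.exp (maxW D l1 x)) := by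
    calc M₀ ≤ q * (Real.exp (‖rhoHO D‖ * ε) * Fsym D Gzero x) *
          Real.exp (maxW D l1 x + ε) := by
          rw [hM₀def]
          gcongr
          · refine (Fsym_le_exp_mul hG0 x p).trans ?_
            gcongr
          · exact (maxW_le_add D l1 x p).trans (by linarith)
      _ = _ := by rw [Real.exp_add, Real.exp_add]; ring
  have hB : 2 * (2 * Real.exp 1 * (A / d)) ≤ 4 * Real.exp 1 * A / c * Λ := by
    have h5 : 1 / d ≤ Λ / c := by
      rw [div_le_div_iff₀ hd hc]
      have h6 := mul_le_mul_of_nonneg_right hcd hΛ0.le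
      have h7 : c * (1 / Λ) * Λ = c := by field_simp
      linarith
    calc 2 * (2 * Real.exp 1 * (A / d)) = 4 * Real.exp 1 * A * (1 / d) := by ring
      _ ≤ 4 * Real.exp 1 * A * (Λ / c) := by gcongr
      _ = _ := by ring
  calc ‖iteratedFDeriv ℝ N (G l1 l2) x ξ‖
      ≤ N.factorial * (2 * ((2 * (2 * Real.exp 1 * (A / d))) ^ N * M₀)) := hmain
    _ ≤ N.factorial * (2 * ((4 * Real.exp 1 * A / c * Λ) ^ N *
        (q * Real.exp (‖rhoHO D‖ * ε + ε) * (Fsym D Gzero x * Real.exp (maxW D l1 x))))) := by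
        gcongr
    _ = _ := by rw [mul_pow]; ring
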